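/- arXiv:1501.01257 — 2 statements merged into one kernel-verified Lean document; each statement's English description precedes it below -/
import Mathlib

section
/- Let n, ℓ ∈ ℕ with ℓ ≥ 1. There exists a constant C = C(ℓ,n) such that for every u ∈ W^{2ℓ−1,1}_loc(ℝⁿ): | Σ_{|α| ≤ ℓ−1} [(2ℓ−2−|α|)! / ((ℓ−1−|α|)! α!)] · (y−x)^α / |y−x|^{2ℓ−1} · [(−1)^{|α|} D^α u(y) − D^α u(x)] | ≤ C ( M(|∇^{2ℓ−1}u|)(x) + M(|∇^{2ℓ−1}u|)(y) ) for a.e. x, y ∈ ℝⁿ, where M is the Hardy–Littlewood maximal operator. -/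
open Set Finset MeasureTheory
open scoped ENNReal NNReal

/-- The finite set of multi-indices α : Fin n → ℕ with |α| = Σ α i ≤ d. -/
def mIdxLe (n d : ℕ) : Finset (Fin n → ℕ) :=
  ((Finset.univ : Finset (Fin n → Fin (d+1))).image fun a i => ((a i : ℕ))).filter
    fun α => ∑ i, α i ≤ d

/-- The Hardy–Littlewood maximal function (over all balls containing the point). -/
noncomputable def maxFn {n : ℕ} (f : EuclideanSpace ℝ (Fin n) → ℝ)
    (x : EuclideanSpace ℝ (Fin n)) : ℝ≥0∞ :=
  ⨆ (c : EuclideanSpace ℝ (Fin n)) (r : ℝ) (_ : x ∈ Metric.ball c r),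
    (volume (Metric.ball c r))⁻¹ * ∫⁻ y in Metric.ball c r, (‖f y‖₊ : ℝ≥0∞)

/-- v is the weak partial derivative of u in direction i. -/
def IsWeakDeriv {n : ℕ} (i : Fin n) (u v : EuclideanSpace ℝ (Fin n) → ℝ) : Prop :=
  ∀ φ : EuclideanSpace ℝ (Fin n) → ℝ, ContDiff ℝ (⊤ : ℕ∞) φ → HasCompactSupport φ →
    ∫ x, u x * fderiv ℝ φ x (EuclideanSpace.single i (1:ℝ)) = - ∫ x, v x * φ x


section aux
/-- Alternating binomial sum. -/
lemma comb_aux (N p : ℕ) (hp : p ≤ 2 * N) :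
    ∑ i ∈ Finset.range (p + 1), (-1 : ℤ) ^ i * (p.choose i) * ((2 * N - i).choose N : ℤ)
      = ((2 * N - p).choose N : ℤ) := by
  have key : (fwdDiff 1)^[p] (fun x : ℕ => (x.choose N : ℤ)) (2 * N - p)
      = ((2 * N - p).choose N : ℤ) := by
    rcases le_or_gt p N with h | h
    · obtain ⟨j, rfl⟩ := Nat.exists_eq_add_of_le h
      rw [fwdDiff_iter_choose]
      have : 2 * (p + j) - p = p + j + j := by omega
      rw [this]
      show (((p + j + j).choose j : ℕ) : ℤ) = _
      exact_mod_cast (Nat.choose_symm_add (a := p + j) (b := j)).symm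
    · obtain ⟨j, rfl⟩ := Nat.exists_eq_add_of_lt h
      have h1 : (fwdDiff 1)^[N + j + 1] (fun x : ℕ => (x.choose N : ℤ)) = fun _ => 0 := by
        have h2 : (fwdDiff 1)^[N + 1] (fun x : ℕ => (x.choose N : ℤ)) = fun _ => 0 := by
          rw [Function.iterate_succ_apply']
          have := fwdDiff_iter_choose 0 N
          rw [add_zero] at this
          rw [this]
          funext x
          simp [fwdDiff]
        rw [show N + j + 1 = j + (N + 1) by ring, Function.iterate_add_apply, h2]
        clear h2 h hp
        induction j with
        | zero => rfl
        | succ j ih => 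
          rw [Function.iterate_succ_apply', ih]; funext x; simp [fwdDiff]
      rw [h1]
      rw [Nat.choose_eq_zero_of_lt (by omega)]; simp
  rw [fwdDiff_iter_eq_sum_shift] at key
  rw [← key, ← Finset.sum_range_reflect]
  apply Finset.sum_congr rfl
  intro i hi
  have hi' : i ≤ p := by simpa [Nat.lt_succ_iff] using hi
  have e1 : p + 1 - 1 - i = p - i := by omega
  have e2 : 2 * N - (p - i) = 2 * N - p + i := by omega
  rw [e1, e2, Nat.choose_symm hi']
  simp

/-- The coefficients of the two-point formula. -/
noncomputable def cf (N k : ℕ) : ℝ := (N.factorial : ℝ) * ((2 * N - k).choose N : ℝ) / (k.factorial : ℝ)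

lemma cf_nonneg (N k : ℕ) : 0 ≤ cf N k := by unfold cf; positivity

lemma cf_eq {N k : ℕ} (h : k ≤ N) :
    cf N k = ((2 * N - k).factorial : ℝ) / ((N - k).factorial * k.factorial) := by
  unfold cf
  have := Nat.choose_mul_factorial_mul_factorial (n := 2 * N - k) (k := N) (by omega)
  have e : 2 * N - k - N = N - k := by omega
  rw [e] at this
  rw [← this]
  push_cast
  have := Nat.factorial_ne_zero (N - k)
  field_simp

lemma cf_zero {N k : ℕ} (hN : N < k) (h : k ≤ 2 * N) : cf N k = 0 := by
  unfold cf
  rw [Nat.choose_eq_zero_of_lt (by omega)]; simp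

lemma cf_sum (N p : ℕ) (hp : p ≤ 2 * N) :
    ∑ i ∈ Finset.range (p + 1), (-1 : ℝ) ^ i * cf N i * ((p - i).factorial : ℝ)⁻¹ = cf N p := by
  have h := congrArg (fun z : ℤ => (z : ℝ)) (comb_aux N p hp)
  push_cast at h
  unfold cf
  rw [← h, Finset.mul_sum, Finset.sum_div]
  apply Finset.sum_congr rfl
  intro i hi
  have hi' : i ≤ p := by simpa [Nat.lt_succ_iff] using hi
  rw [Nat.cast_choose ℝ hi']
  have := Nat.factorial_ne_zero (p - i)
  have := Nat.factorial_ne_zero i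
  have := Nat.factorial_ne_zero p
  field_simp

lemma poly_hom {R : Type*} [CommRing R] [Algebra ℝ R] (A B : R) (N d : ℕ) (hd : d ≤ 2 * N) :
    ∑ k ∈ Finset.range (d + 1), (cf N k * ((d - k).factorial : ℝ)⁻¹) •
      (A ^ k * ((-1) ^ k * (A + B) ^ (d - k) - B ^ (d - k))) = 0 := by
  let _ : Algebra ℚ R := ((algebraMap ℝ R).comp (algebraMap ℚ ℝ)).toAlgebra
  have hq : ∀ j : ℕ, algebraMap ℚ R (1 / (j.factorial : ℚ))
      = algebraMap ℝ R ((j.factorial : ℝ)⁻¹) := by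
    intro j
    change algebraMap ℝ R (algebraMap ℚ ℝ _) = _
    simp
  let P : PowerSeries R := PowerSeries.mk fun k => algebraMap ℝ R ((-1) ^ k * cf N k) * A ^ k
  let Q : PowerSeries R := PowerSeries.mk fun k => algebraMap ℝ R (cf N k) * A ^ k
  let E : R → PowerSeries R := fun a => PowerSeries.rescale a (PowerSeries.exp R)
  have hE : ∀ a j, PowerSeries.coeff j (E a) = algebraMap ℝ R ((j.factorial : ℝ)⁻¹) * a ^ j := by
    intro a j
    simp only [E, PowerSeries.coeff_rescale, PowerSeries.coeff_exp]
    rw [hq, mul_comm]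
  have hPE : ∀ p ≤ 2 * N, PowerSeries.coeff p (P * E A) = PowerSeries.coeff p Q := by
    intro p hp
    rw [PowerSeries.coeff_mul, Finset.Nat.sum_antidiagonal_eq_sum_range_succ
      (f := fun i j => PowerSeries.coeff i P * PowerSeries.coeff j (E A))]
    simp only [hE, P, Q, PowerSeries.coeff_mk]
    rw [← cf_sum N p hp, map_sum, Finset.sum_mul]
    apply Finset.sum_congr rfl
    intro i hi
    have hi' : i ≤ p := by simpa [Nat.lt_succ_iff] using hi
    have : A ^ p = A ^ i * A ^ (p - i) := by rw [← pow_add]; congr 1; omega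
    rw [this]
    simp only [map_mul]
    ring
  have hmain : PowerSeries.coeff d (P * E (A + B)) = PowerSeries.coeff d (Q * E B) := by
    have : E (A + B) = E A * E B := (PowerSeries.exp_mul_exp_eq_exp_add A B).symm
    rw [this, ← mul_assoc, PowerSeries.coeff_mul, PowerSeries.coeff_mul]
    apply Finset.sum_congr rfl
    rintro ⟨i, j⟩ hij
    have : i ≤ 2 * N := by have := Finset.HasAntidiagonal.mem_antidiagonal.1 hij; simp at this; omega
    simp only [hPE i this]
  rw [← sub_eq_zero, PowerSeries.coeff_mul, PowerSeries.coeff_mul,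
    Finset.Nat.sum_antidiagonal_eq_sum_range_succ
      (f := fun i j => PowerSeries.coeff i P * PowerSeries.coeff j (E (A + B))),
    Finset.Nat.sum_antidiagonal_eq_sum_range_succ
      (f := fun i j => PowerSeries.coeff i Q * PowerSeries.coeff j (E B)),
    ← Finset.sum_sub_distrib] at hmain
  rw [← hmain]
  apply Finset.sum_congr rfl
  intro i hi
  simp only [hE, P, Q, PowerSeries.coeff_mk, Algebra.smul_def, map_mul, map_pow, map_neg, map_one]
  ring

lemma poly_id {R : Type*} [CommRing R] [Algebra ℝ R] (A B : R) (N : ℕ) :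
    ∑ k ∈ Finset.range (2 * N + 1), ∑ j ∈ Finset.range (2 * N + 1 - k),
      (cf N k * (j.factorial : ℝ)⁻¹) • (A ^ k * ((-1) ^ k * (A + B) ^ j - B ^ j)) = 0 := by
  rw [← Finset.sum_range_diag_flip (2 * N + 1)
    (fun k j => (cf N k * (j.factorial : ℝ)⁻¹) • (A ^ k * ((-1) ^ k * (A + B) ^ j - B ^ j)))]
  apply Finset.sum_eq_zero
  intro d hd
  exact poly_hom A B N d (by simp at hd; omega)

/-- The linear form attached to a vector. -/
noncomputable def lin {n : ℕ} (h : EuclideanSpace ℝ (Fin n)) : MvPolynomial (Fin n) ℝ :=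
  ∑ i, MvPolynomial.C (h i) * MvPolynomial.X i

/-- The linear functional sending the monomial `X^α` to `V α w`. -/
noncomputable def Lam {n : ℕ} (V : (Fin n → ℕ) → EuclideanSpace ℝ (Fin n) → ℝ)
    (w : EuclideanSpace ℝ (Fin n)) : MvPolynomial (Fin n) ℝ →ₗ[ℝ] ℝ :=
  (MvPolynomial.basisMonomials (Fin n) ℝ).constr ℝ (fun α => V (⇑α) w)

variable {n : ℕ}

lemma lin_add (h v : EuclideanSpace ℝ (Fin n)) : lin (h + v) = lin h + lin v := by
  simp [lin, add_mul, Finset.sum_add_distrib]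

lemma lin_hom (h : EuclideanSpace ℝ (Fin n)) : (lin h).IsHomogeneous 1 := by
  apply MvPolynomial.IsHomogeneous.sum
  intro i _
  exact MvPolynomial.isHomogeneous_C_mul_X _ _

lemma lam_monomial (V : (Fin n → ℕ) → EuclideanSpace ℝ (Fin n) → ℝ)
    (w : EuclideanSpace ℝ (Fin n)) (α : Fin n →₀ ℕ) (c : ℝ) :
    Lam V w (MvPolynomial.monomial α c) = c * V (⇑α) w := by
  have h1 : MvPolynomial.monomial α c = c • MvPolynomial.basisMonomials (Fin n) ℝ α := by
    simp [MvPolynomial.smul_monomial]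
  rw [h1, map_smul, Lam, Module.Basis.constr_basis, smul_eq_mul]

lemma lam_eq_sum (V : (Fin n → ℕ) → EuclideanSpace ℝ (Fin n) → ℝ)
    (w : EuclideanSpace ℝ (Fin n)) (q : MvPolynomial (Fin n) ℝ) :
    Lam V w q = ∑ α ∈ q.support, q.coeff α * V (⇑α) w := by
  conv_lhs => rw [MvPolynomial.as_sum q, map_sum]
  simp only [lam_monomial]

lemma monomial_mul_lin (α : Fin n →₀ ℕ) (c : ℝ) (v : EuclideanSpace ℝ (Fin n)) :
    MvPolynomial.monomial α c * lin v
      = ∑ i, MvPolynomial.monomial (α + Finsupp.single i 1) (c * v i) := by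
  rw [lin, Finset.mul_sum]
  apply Finset.sum_congr rfl
  intro i _
  rw [MvPolynomial.C_mul_X_eq_monomial, MvPolynomial.monomial_mul]

lemma hom_sum {q : MvPolynomial (Fin n) ℝ} {d : ℕ} (hq : q.IsHomogeneous d)
    {α : Fin n →₀ ℕ} (hα : α ∈ q.support) : ∑ i, α i = d := by
  have := hq (MvPolynomial.mem_support_iff.1 hα)
  rw [← this, Finsupp.weight_apply, Finsupp.sum_fintype _ _ (by simp)]
  simp

lemma coe_add_single (α : Fin n →₀ ℕ) (i : Fin n) :
    ⇑(α + Finsupp.single i 1 : Fin n →₀ ℕ) = ⇑α + Pi.single i 1 := by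
  rw [Finsupp.coe_add, Finsupp.single_eq_pi_single]

/-- The family `V` consists of classical derivatives up to order `m`. -/
structure Smooth (V : (Fin n → ℕ) → EuclideanSpace ℝ (Fin n) → ℝ) (m : ℕ) : Prop where
  deriv : ∀ α : Fin n → ℕ, ∑ i, α i < m → ∀ w, ∃ L : EuclideanSpace ℝ (Fin n) →L[ℝ] ℝ,
    HasFDerivAt (V α) L w ∧ ∀ i, L (EuclideanSpace.single i (1 : ℝ)) = V (α + Pi.single i 1) w
  cont : ∀ α : Fin n → ℕ, ∑ i, α i ≤ m → Continuous (V α)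

lemma sum_single_eq (v : EuclideanSpace ℝ (Fin n)) :
    v = ∑ i, v i • EuclideanSpace.single i (1 : ℝ) := by
  ext j
  simp [Finset.sum_apply, Pi.single_apply]

lemma lam_deriv {V : (Fin n → ℕ) → EuclideanSpace ℝ (Fin n) → ℝ} {m : ℕ} (hV : Smooth V m)
    {q : MvPolynomial (Fin n) ℝ} {d : ℕ} (hq : q.IsHomogeneous d) (hd : d < m)
    (z v : EuclideanSpace ℝ (Fin n)) (t : ℝ) :
    HasDerivAt (fun t : ℝ => Lam V (z + t • v) q) (Lam V (z + t • v) (q * lin v)) t := by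
  have h1 : Lam V (z + t • v) (q * lin v) = ∑ α ∈ q.support,
      q.coeff α * ∑ i, v i * V (⇑α + Pi.single i 1) (z + t • v) := by
    conv_lhs => rw [MvPolynomial.as_sum q, Finset.sum_mul, map_sum]
    apply Finset.sum_congr rfl
    intro α _
    rw [monomial_mul_lin, map_sum, Finset.mul_sum]
    apply Finset.sum_congr rfl
    intro i _
    rw [lam_monomial, coe_add_single, mul_assoc]
  rw [h1]
  simp only [lam_eq_sum]
  apply HasDerivAt.fun_sum
  intro α hα
  apply HasDerivAt.const_mul
  have hs := hom_sum hq hα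
  obtain ⟨L, hL, hLi⟩ := hV.deriv (⇑α) (by omega) (z + t • v)
  have h2 : HasDerivAt (fun t : ℝ => z + t • v) v t := by
    simpa using ((hasDerivAt_id t).smul_const v).const_add z
  have h3 := hL.comp_hasDerivAt t h2
  have h4 : L v = ∑ i, v i * V (⇑α + Pi.single i 1) (z + t • v) := by
    conv_lhs => rw [sum_single_eq v, map_sum]
    simp [hLi]
  rw [← h4]
  exact h3

lemma lam_cont {V : (Fin n → ℕ) → EuclideanSpace ℝ (Fin n) → ℝ} {m : ℕ} (hV : Smooth V m)
    {q : MvPolynomial (Fin n) ℝ} {d : ℕ} (hq : q.IsHomogeneous d) (hd : d ≤ m) :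
    Continuous (fun w => Lam V w q) := by
  simp only [lam_eq_sum]
  refine continuous_finsetSum _ fun α hα => continuous_const.mul (hV.cont _ ?_)
  rw [hom_sum hq hα]; exact hd

lemma lam_taylor {V : (Fin n → ℕ) → EuclideanSpace ℝ (Fin n) → ℝ} {m : ℕ} (hV : Smooth V m)
    {q : MvPolynomial (Fin n) ℝ} {d K : ℕ} (hq : q.IsHomogeneous d) (hd : d + (K + 1) = m)
    (z x : EuclideanSpace ℝ (Fin n)) :
    Lam V x q - ∑ j ∈ Finset.range (K + 1), (j.factorial : ℝ)⁻¹ * Lam V z (q * lin (x - z) ^ j)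
      = ∫ t in (0 : ℝ)..1, (1 - t) ^ K * (K.factorial : ℝ)⁻¹ *
          Lam V (z + t • (x - z)) (q * lin (x - z) ^ (K + 1)) := by
  have hqj : ∀ j, (q * lin (x - z) ^ j).IsHomogeneous (d + j) := by
    intro j
    have := hq.mul ((lin_hom (x - z)).pow j)
    simpa using this
  have hder : ∀ k ≤ K, ∀ t : ℝ, HasDerivAt (fun t : ℝ => ∑ j ∈ Finset.range (k + 1),
      (1 - t) ^ j * (j.factorial : ℝ)⁻¹ * Lam V (z + t • (x - z)) (q * lin (x - z) ^ j))
      ((1 - t) ^ k * (k.factorial : ℝ)⁻¹ *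
          Lam V (z + t • (x - z)) (q * lin (x - z) ^ (k + 1))) t := by
    intro k
    induction k with
    | zero =>
      intro _ t
      simpa using lam_deriv hV hq (by omega) z (x - z) t
    | succ k ih =>
      intro hk t
      have h1 := ih (by omega) t
      have h2 := lam_deriv hV (hqj (k + 1)) (by omega) z (x - z) t
      have h3 : HasDerivAt (fun t : ℝ => (1 - t) ^ (k + 1) * ((k + 1).factorial : ℝ)⁻¹)
          (- ((1 - t) ^ k * (k.factorial : ℝ)⁻¹)) t := by
        have h4 := ((((hasDerivAt_id t).const_sub 1).pow (k + 1))).mul_const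
          ((k + 1).factorial : ℝ)⁻¹
        refine h4.congr_deriv ?_
        rw [Nat.factorial_succ]
        push_cast
        have := Nat.factorial_ne_zero k
        have : (k : ℝ) + 1 ≠ 0 := by positivity
        field_simp
        simp
      have h5 := h1.add (h3.mul h2)
      have h6 : (fun t : ℝ => ∑ j ∈ Finset.range (k + 1 + 1),
          (1 - t) ^ j * (j.factorial : ℝ)⁻¹ * Lam V (z + t • (x - z)) (q * lin (x - z) ^ j))
          = fun t => (∑ j ∈ Finset.range (k + 1),
          (1 - t) ^ j * (j.factorial : ℝ)⁻¹ * Lam V (z + t • (x - z)) (q * lin (x - z) ^ j))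
          + (1 - t) ^ (k + 1) * ((k + 1).factorial : ℝ)⁻¹ *
            Lam V (z + t • (x - z)) (q * lin (x - z) ^ (k + 1)) := by
        funext t; rw [Finset.sum_range_succ]
      rw [h6]
      refine h5.congr_deriv ?_
      rw [mul_assoc q, ← pow_succ]
      ring
  rw [intervalIntegral.integral_eq_sub_of_hasDerivAt (fun t _ => hder K le_rfl t)]
  · congr 1
    · rw [Finset.sum_eq_single 0]
      · simp
      · intro b _ hb; simp [hb]
      · simp
    · simp
  · apply Continuous.intervalIntegrable
    have := lam_cont hV (hqj (K + 1)) (by omega)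
    fun_prop

lemma lam_bound {V : (Fin n → ℕ) → EuclideanSpace ℝ (Fin n) → ℝ} {m : ℕ}
    {w : EuclideanSpace ℝ (Fin n)} {g : ℝ}
    (hg : ∀ α : Fin n → ℕ, ∑ i, α i = m → |V α w| ≤ g) (h v : EuclideanSpace ℝ (Fin n))
    (k K : ℕ) : ∀ α : Fin n →₀ ℕ, ∑ i, α i + k + K = m →
    |Lam V w (MvPolynomial.monomial α 1 * lin h ^ k * lin v ^ K)|
      ≤ (n * ‖h‖) ^ k * (n * ‖v‖) ^ K * g := by
  have step : ∀ (p : MvPolynomial (Fin n) ℝ) (b : ℝ) (u : EuclideanSpace ℝ (Fin n))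
      (α : Fin n →₀ ℕ),
      (∀ i, |Lam V w (MvPolynomial.monomial (α + Finsupp.single i 1) 1 * p)| ≤ b) →
      |Lam V w (MvPolynomial.monomial α 1 * lin u * p)| ≤ (n * ‖u‖) * b := by
    intro p b u α H
    rw [monomial_mul_lin, Finset.sum_mul, map_sum]
    refine (Finset.abs_sum_le_sum_abs _ _).trans ?_
    have : ∀ i ∈ (Finset.univ : Finset (Fin n)),
        |Lam V w (MvPolynomial.monomial (α + Finsupp.single i 1) (1 * u i) * p)| ≤ ‖u‖ * b := by
      intro i _
      have e : MvPolynomial.monomial (α + Finsupp.single i 1) (1 * u i) * p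
          = u i • (MvPolynomial.monomial (α + Finsupp.single i 1) 1 * p) := by
        rw [← smul_mul_assoc, MvPolynomial.smul_monomial]
        simp
      rw [e, map_smul, smul_eq_mul, abs_mul]
      exact mul_le_mul (PiLp.norm_apply_le u i) (H i) (abs_nonneg _)
        (norm_nonneg _)
    refine (Finset.sum_le_sum this).trans ?_
    simp [mul_assoc]
  have hsum : ∀ (α : Fin n →₀ ℕ) i, ∑ j, (α + Finsupp.single i 1 : Fin n →₀ ℕ) j = ∑ j, α j + 1 := by
    intro α i
    simp [Finset.sum_add_distrib, Finsupp.single_apply]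
  induction k with
  | zero =>
    induction K with
    | zero =>
      intro α hα
      simp only [pow_zero, mul_one, lam_monomial, one_mul]
      exact hg _ (by omega)
    | succ K ih =>
      intro α hα
      have := step (lin v ^ K) ((n * ‖v‖) ^ K * g) v α (fun i => by
        have := ih (α + Finsupp.single i 1) (by rw [hsum]; omega)
        simpa using this)
      convert this using 1
      · congr 2; ring
      · ring
  | succ k ih =>
    intro α hα
    have := step (lin h ^ k * lin v ^ K) ((n * ‖h‖) ^ k * (n * ‖v‖) ^ K * g) h α (fun i => by
      have := ih (α + Finsupp.single i 1) (by rw [hsum]; omega)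
      rwa [← mul_assoc])
    convert this using 1
    · congr 2; ring
    · ring

lemma lam_bound' {V : (Fin n → ℕ) → EuclideanSpace ℝ (Fin n) → ℝ} {m : ℕ}
    {w : EuclideanSpace ℝ (Fin n)} {g : ℝ}
    (hg : ∀ α : Fin n → ℕ, ∑ i, α i = m → |V α w| ≤ g) (h v : EuclideanSpace ℝ (Fin n))
    (k K : ℕ) (hk : k + K = m) :
    |Lam V w (lin h ^ k * lin v ^ K)| ≤ (n * ‖h‖) ^ k * (n * ‖v‖) ^ K * g := by
  have := lam_bound hg h v k K 0 (by simpa using hk)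
  simpa using this

lemma lam_lin_pow (V : (Fin n → ℕ) → EuclideanSpace ℝ (Fin n) → ℝ)
    (w h : EuclideanSpace ℝ (Fin n)) (k : ℕ) :
    Lam V w (lin h ^ k) = ∑ α ∈ (Finset.univ : Finset (Fin n)).piAntidiag k,
      (Nat.multinomial Finset.univ α : ℝ) * (∏ i, h i ^ α i) * V α w := by
  rw [lin, Finset.sum_pow_eq_sum_piAntidiag, map_sum]
  apply Finset.sum_congr rfl
  intro α _
  have e : ((Nat.multinomial Finset.univ α : ℕ) : MvPolynomial (Fin n) ℝ) *
      ∏ i, (MvPolynomial.C (h i) * MvPolynomial.X i) ^ α i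
      = MvPolynomial.monomial (Finsupp.equivFunOnFinite.symm α)
        ((Nat.multinomial Finset.univ α : ℝ) * (∏ i, h i ^ α i)) := by
    rw [MvPolynomial.monomial_eq, Finsupp.prod_fintype _ _ (by simp)]
    simp only [mul_pow, Finset.prod_mul_distrib, map_mul, map_prod, map_pow, map_natCast]
    simp [mul_assoc]
  rw [e, lam_monomial]
  rfl

lemma ball_vol_ne {c x : EuclideanSpace ℝ (Fin n)} {r : ℝ} (hx : x ∈ Metric.ball c r) :
    volume (Metric.ball c r) ≠ 0 :=
  (Metric.measure_ball_pos volume c (Metric.pos_of_mem_ball hx)).ne'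

lemma setLIntegral_le_maxFn (f : EuclideanSpace ℝ (Fin n) → ℝ) {c x : EuclideanSpace ℝ (Fin n)}
    {r : ℝ} (hx : x ∈ Metric.ball c r) :
    ∫⁻ y in Metric.ball c r, ‖f y‖ₑ ≤ volume (Metric.ball c r) * maxFn f x := by
  have h : (volume (Metric.ball c r))⁻¹ * ∫⁻ y in Metric.ball c r, ‖f y‖ₑ ≤ maxFn f x := by
    unfold maxFn
    exact le_iSup_of_le c (le_iSup_of_le r (le_iSup_of_le hx le_rfl))
  rwa [ENNReal.inv_mul_le_iff (ball_vol_ne hx) measure_ball_lt_top.ne] at h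

lemma maxFn_le {f : EuclideanSpace ℝ (Fin n) → ℝ} {x : EuclideanSpace ℝ (Fin n)} {D : ℝ≥0∞}
    (h : ∀ c r, x ∈ Metric.ball c r →
      ∫⁻ y in Metric.ball c r, ‖f y‖ₑ ≤ volume (Metric.ball c r) * D) : maxFn f x ≤ D := by
  unfold maxFn
  refine iSup_le fun c => iSup_le fun r => iSup_le fun hx => ?_
  rw [ENNReal.inv_mul_le_iff (ball_vol_ne hx) measure_ball_lt_top.ne]
  exact h c r hx

lemma slice_le {g : EuclideanSpace ℝ (Fin n) → ℝ} (hg : Continuous g)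
    {c x : EuclideanSpace ℝ (Fin n)} {R : ℝ} (hx : x ∈ Metric.ball c R) {t : ℝ}
    (ht1 : t < 1) :
    ∫⁻ z in Metric.ball c R, ‖g (z + t • (x - z))‖ₑ
      ≤ volume (Metric.ball c R) * maxFn g x := by
  have hs : 0 < 1 - t := by linarith
  have hR := Metric.pos_of_mem_ball hx
  set s := 1 - t with hsdef
  set c' := s • c + t • x with hc'
  have hT : ∀ z, z + t • (x - z) = s • z + t • x := by
    intro z; rw [hsdef]; module
  have hdist : ∀ z, dist (s • z + t • x) c' = s * dist z c := by
    intro z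
    rw [hc', dist_add_right, dist_smul₀, Real.norm_of_nonneg hs.le]
  have hmem : ∀ z, z ∈ Metric.ball c R ↔ s • z + t • x ∈ Metric.ball c' (s * R) := by
    intro z
    rw [Metric.mem_ball, Metric.mem_ball, hdist, mul_lt_mul_iff_right₀ hs]
  have hx' : x ∈ Metric.ball c' (s * R) := by
    have := (hmem x).1 hx
    have e : s • x + t • x = x := by rw [hsdef]; module
    rwa [e] at this
  set F : EuclideanSpace ℝ (Fin n) → ℝ≥0∞ :=
    (Metric.ball c' (s * R)).indicator (fun y => ‖g y‖ₑ) with hF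
  have hFm : Measurable F :=
    (hg.enorm.measurable).indicator measurableSet_ball
  have h1 : ∫⁻ z in Metric.ball c R, ‖g (z + t • (x - z))‖ₑ = ∫⁻ z, F (s • z + t • x) := by
    rw [← lintegral_indicator measurableSet_ball]
    apply lintegral_congr
    intro z
    simp only [hF, Set.indicator]
    by_cases hz : z ∈ Metric.ball c R
    · rw [if_pos hz, if_pos ((hmem z).1 hz), hT]
    · rw [if_neg hz, if_neg (fun h => hz ((hmem z).2 h))]
  have h2 : ∫⁻ z, F (s • z + t • x)
      = ENNReal.ofReal |(s ^ Module.finrank ℝ (EuclideanSpace ℝ (Fin n)))⁻¹| * ∫⁻ z, F z := by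
    have e1 : ∫⁻ z, F (s • z + t • x) = ∫⁻ y, F (y + t • x)
        ∂(Measure.map (fun z : EuclideanSpace ℝ (Fin n) => s • z) volume) := by
      exact (lintegral_map (f := fun y => F (y + t • x)) (hFm.comp (measurable_add_const _))
        (measurable_const_smul s)).symm
    rw [e1, Measure.map_addHaar_smul volume hs.ne', lintegral_smul_measure,
      lintegral_add_right_eq_self F, smul_eq_mul]
  rw [h1, h2, hF, lintegral_indicator measurableSet_ball]
  calc _ ≤ ENNReal.ofReal |(s ^ Module.finrank ℝ (EuclideanSpace ℝ (Fin n)))⁻¹| *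
        (volume (Metric.ball c' (s * R)) * maxFn g x) := by
        gcongr; exact setLIntegral_le_maxFn g hx'
    _ = volume (Metric.ball c R) * maxFn g x := by
        rw [Measure.addHaar_ball_mul_of_pos volume c' hs R, ← mul_assoc, ← mul_assoc,
          ← ENNReal.ofReal_mul (abs_nonneg _), abs_of_pos (by positivity),
          inv_mul_cancel₀ (by positivity), Measure.addHaar_ball_center volume c R]
        simp

lemma avg_le {g : EuclideanSpace ℝ (Fin n) → ℝ} (hg : Continuous g)
    {c x : EuclideanSpace ℝ (Fin n)} {R : ℝ} (hx : x ∈ Metric.ball c R) :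
    ∫⁻ z in Metric.ball c R, ∫⁻ t in Set.Ioo (0 : ℝ) 1, ‖g (z + t • (x - z))‖ₑ
      ≤ volume (Metric.ball c R) * maxFn g x := by
  rw [lintegral_lintegral_swap]
  · calc _ ≤ ∫⁻ t in Set.Ioo (0 : ℝ) 1, volume (Metric.ball c R) * maxFn g x := by
          refine setLIntegral_mono' measurableSet_Ioo fun t ht => slice_le hg hx ht.2
      _ = _ := by simp
  · apply Measurable.aemeasurable
    apply Continuous.measurable
    simp only [Function.uncurry_def]
    fun_prop

/-- The two-point functional. -/
noncomputable def Lf (V : (Fin n → ℕ) → EuclideanSpace ℝ (Fin n) → ℝ) (N : ℕ)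
    (x y : EuclideanSpace ℝ (Fin n)) : ℝ :=
  ∑ k ∈ Finset.range (2 * N + 1), cf N k *
    ((-1) ^ k * Lam V y (lin (y - x) ^ k) - Lam V x (lin (y - x) ^ k))

lemma rem_bound {V : (Fin n → ℕ) → EuclideanSpace ℝ (Fin n) → ℝ} {N : ℕ}
    (hV : Smooth V (2 * N + 1)) {g : EuclideanSpace ℝ (Fin n) → ℝ} (hgc : Continuous g)
    (hg : ∀ w, ∀ α : Fin n → ℕ, ∑ i, α i = 2 * N + 1 → |V α w| ≤ g w) (hg0 : ∀ w, 0 ≤ g w)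
    (h z x : EuclideanSpace ℝ (Fin n)) (hx : ‖x - z‖ ≤ 3 * ‖h‖) (k : ℕ) (hk : k ≤ 2 * N) :
    |Lam V x (lin h ^ k) - ∑ j ∈ Finset.range (2 * N + 1 - k),
      (j.factorial : ℝ)⁻¹ * Lam V z (lin h ^ k * lin (x - z) ^ j)|
      ≤ (n * (3 * ‖h‖)) ^ (2 * N + 1) * ∫ t in (0 : ℝ)..1, g (z + t • (x - z)) := by
  obtain ⟨K, hK⟩ := Nat.exists_eq_add_of_le hk
  have hK1 : 2 * N + 1 - k = K + 1 := by omega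
  have hhom : (lin h ^ k).IsHomogeneous k := by simpa using (lin_hom h).pow k
  rw [hK1, lam_taylor hV hhom (by omega) z x, ← intervalIntegral.integral_const_mul]
  have hc1 : Continuous fun t : ℝ => g (z + t • (x - z)) := by fun_prop
  rw [← Real.norm_eq_abs]
  apply intervalIntegral.norm_integral_le_of_norm_le zero_le_one
  · refine Filter.Eventually.of_forall fun t ht => ?_
    rw [norm_mul, Real.norm_eq_abs, Real.norm_eq_abs]
    have b1 : |(1 - t) ^ K * (K.factorial : ℝ)⁻¹| ≤ 1 := by
      rw [abs_mul, abs_pow]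
      have a1 : |1 - t| ^ K ≤ 1 := by
        apply pow_le_one₀ (abs_nonneg _)
        rw [abs_le]; constructor <;> linarith [ht.1, ht.2]
      have a2 : |(K.factorial : ℝ)⁻¹| ≤ 1 := by
        rw [abs_of_nonneg (by positivity)]
        apply inv_le_one_of_one_le₀
        exact_mod_cast Nat.one_le_iff_ne_zero.2 (Nat.factorial_ne_zero K)
      exact mul_le_one₀ a1 (abs_nonneg _) a2
    have b2 := lam_bound' (hg (z + t • (x - z))) h (x - z) k (K + 1) (by omega)
    have b3 : ((n : ℝ) * ‖h‖) ^ k * (n * ‖x - z‖) ^ (K + 1) ≤ (n * (3 * ‖h‖)) ^ (2 * N + 1) := by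
      have : 2 * N + 1 = k + (K + 1) := by omega
      rw [this, pow_add (_ * (3 * ‖h‖))]
      have : ‖h‖ ≤ 3 * ‖h‖ := by linarith [norm_nonneg h]
      gcongr
    calc _ ≤ 1 * (((n : ℝ) * ‖h‖) ^ k * (n * ‖x - z‖) ^ (K + 1) * g (z + t • (x - z))) := by
          gcongr
      _ ≤ _ := by
          rw [one_mul]
          exact mul_le_mul_of_nonneg_right b3 (hg0 _)
  · exact (continuous_const.mul hc1).intervalIntegrable _ _

lemma Lf_eq (V : (Fin n → ℕ) → EuclideanSpace ℝ (Fin n) → ℝ) (N : ℕ)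
    (x y z : EuclideanSpace ℝ (Fin n)) :
    Lf V N x y = ∑ k ∈ Finset.range (2 * N + 1), cf N k *
      ((-1) ^ k * (Lam V y (lin (y - x) ^ k) - ∑ j ∈ Finset.range (2 * N + 1 - k),
        (j.factorial : ℝ)⁻¹ * Lam V z (lin (y - x) ^ k * lin (y - z) ^ j))
      - (Lam V x (lin (y - x) ^ k) - ∑ j ∈ Finset.range (2 * N + 1 - k),
        (j.factorial : ℝ)⁻¹ * Lam V z (lin (y - x) ^ k * lin (x - z) ^ j))) := by
  have h := congrArg (Lam V z) (poly_id (lin (y - x)) (lin (x - z)) N)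
  have e : lin (y - x) + lin (x - z) = lin (y - z) := by rw [← lin_add]; congr 1; abel
  rw [e, map_zero, map_sum] at h
  rw [← add_zero (Lf V N x y), ← neg_zero, ← h, ← sub_eq_add_neg, Lf, ← Finset.sum_sub_distrib]
  apply Finset.sum_congr rfl
  intro k _
  have h2 : Lam V z (∑ j ∈ Finset.range (2 * N + 1 - k), (cf N k * (j.factorial : ℝ)⁻¹) •
      (lin (y - x) ^ k * ((-1) ^ k * lin (y - z) ^ j - lin (x - z) ^ j)))
      = cf N k * ((-1) ^ k * ∑ j ∈ Finset.range (2 * N + 1 - k),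
        (j.factorial : ℝ)⁻¹ * Lam V z (lin (y - x) ^ k * lin (y - z) ^ j)
        - ∑ j ∈ Finset.range (2 * N + 1 - k),
        (j.factorial : ℝ)⁻¹ * Lam V z (lin (y - x) ^ k * lin (x - z) ^ j)) := by
    rw [map_sum, Finset.mul_sum, ← Finset.sum_sub_distrib, Finset.mul_sum]
    apply Finset.sum_congr rfl
    intro j _
    have e2 : lin (y - x) ^ k * ((-1) ^ k * lin (y - z) ^ j - lin (x - z) ^ j)
        = ((-1 : ℝ) ^ k) • (lin (y - x) ^ k * lin (y - z) ^ j)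
          - lin (y - x) ^ k * lin (x - z) ^ j := by
      rw [Algebra.smul_def, map_pow, map_neg, map_one]; ring
    rw [map_smul, e2, map_sub, map_smul, smul_eq_mul, smul_eq_mul]
    ring
  rw [h2]
  ring

/-- The constant in the smooth estimate. -/
noncomputable def C0 (n N : ℕ) : ℝ :=
  (∑ k ∈ Finset.range (2 * N + 1), cf N k) * (n * 3) ^ (2 * N + 1)

lemma C0_nonneg (n N : ℕ) : 0 ≤ C0 n N :=
  mul_nonneg (Finset.sum_nonneg fun k _ => cf_nonneg N k) (by positivity)

lemma point_est {V : (Fin n → ℕ) → EuclideanSpace ℝ (Fin n) → ℝ} {N : ℕ}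
    (hV : Smooth V (2 * N + 1)) {g : EuclideanSpace ℝ (Fin n) → ℝ} (hgc : Continuous g)
    (hg : ∀ w, ∀ α : Fin n → ℕ, ∑ i, α i = 2 * N + 1 → |V α w| ≤ g w) (hg0 : ∀ w, 0 ≤ g w)
    (x y z : EuclideanSpace ℝ (Fin n)) (hx : ‖x - z‖ ≤ 3 * ‖y - x‖)
    (hy : ‖y - z‖ ≤ 3 * ‖y - x‖) :
    |Lf V N x y| ≤ C0 n N * ‖y - x‖ ^ (2 * N + 1) *
      ((∫ t in (0 : ℝ)..1, g (z + t • (x - z))) + ∫ t in (0 : ℝ)..1, g (z + t • (y - z))) := by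
  rw [Lf_eq V N x y z, C0]
  refine (Finset.abs_sum_le_sum_abs _ _).trans ?_
  rw [Finset.sum_mul, Finset.sum_mul, Finset.sum_mul]
  apply Finset.sum_le_sum
  intro k hk
  have hk' : k ≤ 2 * N := by simp at hk; omega
  have h1 := rem_bound hV hgc hg hg0 (y - x) z x hx k hk'
  have h2 := rem_bound hV hgc hg hg0 (y - x) z y hy k hk'
  rw [abs_mul, abs_of_nonneg (cf_nonneg N k), mul_assoc, mul_assoc]
  apply mul_le_mul_of_nonneg_left _ (cf_nonneg N k)
  refine (abs_sub _ _).trans ?_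
  rw [abs_mul, abs_pow, abs_neg, abs_one, one_pow, one_mul]
  refine (add_le_add h2 h1).trans (le_of_eq ?_)
  ring

lemma ofReal_int {g : EuclideanSpace ℝ (Fin n) → ℝ} (hgc : Continuous g) (hg0 : ∀ w, 0 ≤ g w)
    (x z : EuclideanSpace ℝ (Fin n)) :
    ENNReal.ofReal (∫ t in (0 : ℝ)..1, g (z + t • (x - z)))
      = ∫⁻ t in Set.Ioo (0 : ℝ) 1, ‖g (z + t • (x - z))‖ₑ := by
  have hc1 : Continuous fun t : ℝ => g (z + t • (x - z)) := by fun_prop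
  rw [intervalIntegral.integral_of_le zero_le_one, integral_Ioc_eq_integral_Ioo,
    ofReal_integral_eq_lintegral_ofReal]
  · apply lintegral_congr
    intro t
    rw [Real.enorm_of_nonneg (hg0 _)]
  · exact (hc1.integrableOn_Icc (a := 0) (b := 1)).mono_set Set.Ioo_subset_Icc_self
  · exact Filter.Eventually.of_forall fun t => hg0 _

lemma smooth_est {V : (Fin n → ℕ) → EuclideanSpace ℝ (Fin n) → ℝ} {N : ℕ}
    (hV : Smooth V (2 * N + 1)) {g : EuclideanSpace ℝ (Fin n) → ℝ} (hgc : Continuous g)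
    (hg : ∀ w, ∀ α : Fin n → ℕ, ∑ i, α i = 2 * N + 1 → |V α w| ≤ g w) (hg0 : ∀ w, 0 ≤ g w)
    (x y : EuclideanSpace ℝ (Fin n)) (hxy : x ≠ y) :
    ENNReal.ofReal |Lf V N x y| ≤ ENNReal.ofReal (C0 n N * ‖y - x‖ ^ (2 * N + 1)) *
      (maxFn g x + maxFn g y) := by
  have hr : 0 < ‖y - x‖ := norm_pos_iff.2 (sub_ne_zero.2 hxy.symm)
  set r := ‖y - x‖ with hrdef
  have hxB : x ∈ Metric.ball x (2 * r) := Metric.mem_ball_self (by linarith)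
  have hyB : y ∈ Metric.ball x (2 * r) := by
    rw [Metric.mem_ball, dist_eq_norm]; linarith
  have hC : 0 ≤ C0 n N * r ^ (2 * N + 1) := mul_nonneg (C0_nonneg n N) (by positivity)
  have hpt : ∀ z ∈ Metric.ball x (2 * r), ENNReal.ofReal |Lf V N x y| ≤
      ENNReal.ofReal (C0 n N * r ^ (2 * N + 1)) *
        ((∫⁻ t in Set.Ioo (0 : ℝ) 1, ‖g (z + t • (x - z))‖ₑ)
          + ∫⁻ t in Set.Ioo (0 : ℝ) 1, ‖g (z + t • (y - z))‖ₑ) := by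
    intro z hz
    have hz1 : ‖x - z‖ < 2 * r := by
      rw [Metric.mem_ball, dist_comm, dist_eq_norm] at hz; exact hz
    have hz2 : ‖y - z‖ ≤ 3 * r := by
      have : y - z = (y - x) + (x - z) := by abel
      rw [this]
      exact (norm_add_le _ _).trans (by linarith)
    have := point_est hV hgc hg hg0 x y z (by linarith) hz2
    rw [← ofReal_int hgc hg0, ← ofReal_int hgc hg0, ← ENNReal.ofReal_add, ← ENNReal.ofReal_mul hC]
    · exact ENNReal.ofReal_le_ofReal this
    · exact intervalIntegral.integral_nonneg zero_le_one fun t _ => hg0 _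
    · exact intervalIntegral.integral_nonneg zero_le_one fun t _ => hg0 _
  have hB0 := ball_vol_ne hxB
  have hBt : volume (Metric.ball x (2 * r)) ≠ ⊤ := measure_ball_lt_top.ne
  have hmeas : Measurable fun z : EuclideanSpace ℝ (Fin n) =>
      ∫⁻ t in Set.Ioo (0 : ℝ) 1, ‖g (z + t • (x - z))‖ₑ := by
    apply Measurable.lintegral_prod_right'
      (f := fun p : EuclideanSpace ℝ (Fin n) × ℝ => ‖g (p.1 + p.2 • (x - p.1))‖ₑ)
    apply Continuous.measurable
    fun_prop
  have hint : volume (Metric.ball x (2 * r)) * ENNReal.ofReal |Lf V N x y| ≤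
      volume (Metric.ball x (2 * r)) * (ENNReal.ofReal (C0 n N * r ^ (2 * N + 1)) *
        (maxFn g x + maxFn g y)) := by
    calc _ = ∫⁻ z in Metric.ball x (2 * r), ENNReal.ofReal |Lf V N x y| := by
            rw [setLIntegral_const, mul_comm]
      _ ≤ ∫⁻ z in Metric.ball x (2 * r), ENNReal.ofReal (C0 n N * r ^ (2 * N + 1)) *
        ((∫⁻ t in Set.Ioo (0 : ℝ) 1, ‖g (z + t • (x - z))‖ₑ)
          + ∫⁻ t in Set.Ioo (0 : ℝ) 1, ‖g (z + t • (y - z))‖ₑ) :=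
            setLIntegral_mono' measurableSet_ball hpt
      _ = ENNReal.ofReal (C0 n N * r ^ (2 * N + 1)) *
        ((∫⁻ z in Metric.ball x (2 * r), ∫⁻ t in Set.Ioo (0 : ℝ) 1, ‖g (z + t • (x - z))‖ₑ)
          + ∫⁻ z in Metric.ball x (2 * r), ∫⁻ t in Set.Ioo (0 : ℝ) 1, ‖g (z + t • (y - z))‖ₑ) := by
            rw [lintegral_const_mul' _ _ ENNReal.ofReal_ne_top, lintegral_add_left hmeas]
      _ ≤ ENNReal.ofReal (C0 n N * r ^ (2 * N + 1)) *
        (volume (Metric.ball x (2 * r)) * maxFn g x + volume (Metric.ball x (2 * r)) * maxFn g y) := by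
            gcongr
            · exact avg_le hgc hxB
            · exact avg_le hgc hyB
      _ = _ := by ring
  exact (ENNReal.mul_le_mul_iff_right hB0 hBt).1 hint

/-- Mollification. -/
noncomputable def moll (φ : ContDiffBump (0 : EuclideanSpace ℝ (Fin n)))
    (f : EuclideanSpace ℝ (Fin n) → ℝ) : EuclideanSpace ℝ (Fin n) → ℝ :=
  convolution (φ.normed volume) f (ContinuousLinearMap.lsmul ℝ ℝ) volume

lemma moll_smooth (φ : ContDiffBump (0 : EuclideanSpace ℝ (Fin n)))
    {U : (Fin n → ℕ) → EuclideanSpace ℝ (Fin n) → ℝ} {m : ℕ}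
    (hU : ∀ α : Fin n → ℕ, (∑ i, α i) ≤ m → LocallyIntegrable (U α) volume)
    (hW : ∀ (α : Fin n → ℕ) (i : Fin n), (∑ j, α j) < m →
        IsWeakDeriv i (U α) (U (α + Pi.single i 1))) :
    Smooth (fun α => moll φ (U α)) m where
  cont := by
    intro α hα
    exact φ.hasCompactSupport_normed.continuous_convolution_left _ φ.continuous_normed (hU α hα)
  deriv := by
    intro α hα w
    have hcs : HasCompactSupport (φ.normed (volume : Measure (EuclideanSpace ℝ (Fin n)))) :=
      φ.hasCompactSupport_normed
    have hsm : ContDiff ℝ (⊤ : ℕ∞) (φ.normed (volume : Measure (EuclideanSpace ℝ (Fin n)))) :=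
      φ.contDiff_normed
    have hsm1 : ContDiff ℝ 1 (φ.normed (volume : Measure (EuclideanSpace ℝ (Fin n)))) :=
      φ.contDiff_normed
    refine ⟨_, hcs.hasFDerivAt_convolution_left (ContinuousLinearMap.lsmul ℝ ℝ) hsm1
      (hU α hα.le) w, ?_⟩
    intro i
    have hint : ConvolutionExistsAt (fderiv ℝ (φ.normed volume)) (U α) w
        ((ContinuousLinearMap.lsmul ℝ ℝ).precompL (EuclideanSpace ℝ (Fin n))) volume :=
      (hcs.fderiv ℝ).convolutionExists_left _ (hsm1.continuous_fderiv one_ne_zero)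
        (hU α hα.le) w
    rw [convolution_def, ContinuousLinearMap.integral_apply hint]
    simp only [ContinuousLinearMap.precompL_apply, ContinuousLinearMap.lsmul_apply, smul_eq_mul]
    have h1 := integral_sub_left_eq_self (fun t => (fderiv ℝ (φ.normed volume) t)
      (EuclideanSpace.single i 1) * U α (w - t)) (volume : Measure (EuclideanSpace ℝ (Fin n))) w
    rw [← h1]
    have h2 := hW α i hα (fun t => φ.normed volume (w - t))
      (hsm.comp (contDiff_const.sub contDiff_id))
      (hcs.comp_homeomorph (Homeomorph.subLeft w))
    have h3 : ∀ t, fderiv ℝ (fun t => φ.normed volume (w - t)) t (EuclideanSpace.single i (1 : ℝ))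
        = - fderiv ℝ (φ.normed volume) (w - t) (EuclideanSpace.single i (1 : ℝ)) := by
      intro t
      have hd : HasFDerivAt (fun t : EuclideanSpace ℝ (Fin n) => w - t)
          (-ContinuousLinearMap.id ℝ (EuclideanSpace ℝ (Fin n))) t :=
        (hasFDerivAt_id t).const_sub w
      have := ((hsm1.differentiable one_ne_zero (w - t)).hasFDerivAt).comp t hd
      have e := this.fderiv
      rw [Function.comp_def] at e
      rw [e]
      simp
    simp only [h3] at h2
    simp only [sub_sub_cancel]
    have h4 : ∫ t, fderiv ℝ (φ.normed volume) (w - t) (EuclideanSpace.single i 1) * U α t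
        = - ∫ t, U α t * - fderiv ℝ (φ.normed volume) (w - t) (EuclideanSpace.single i 1) := by
      rw [← integral_neg]
      congr 1; funext t; ring
    rw [h4, h2, neg_neg, moll, convolution_def]
    have h5 := integral_sub_left_eq_self (fun t => φ.normed volume t *
      U (α + Pi.single i 1) (w - t)) (volume : Measure (EuclideanSpace ℝ (Fin n))) w
    simp only [sub_sub_cancel] at h5
    simp only [ContinuousLinearMap.lsmul_apply, smul_eq_mul]
    rw [← h5]
    congr 1; funext t; ring

lemma shift_int (f : EuclideanSpace ℝ (Fin n) → ℝ) (c s : EuclideanSpace ℝ (Fin n)) (r : ℝ) :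
    ∫⁻ z in Metric.ball c r, ‖f (z - s)‖ₑ = ∫⁻ y in Metric.ball (c - s) r, ‖f y‖ₑ := by
  rw [← lintegral_indicator measurableSet_ball, ← lintegral_indicator measurableSet_ball,
    
    ← lintegral_sub_right_eq_self ((Metric.ball (c - s) r).indicator fun y => ‖f y‖ₑ) s]
  apply lintegral_congr
  intro z
  have : z - s ∈ Metric.ball (c - s) r ↔ z ∈ Metric.ball c r := by
    simp [Metric.mem_ball]
  by_cases h : z ∈ Metric.ball c r
  · rw [Set.indicator_of_mem h, Set.indicator_of_mem (this.2 h)]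
  · rw [Set.indicator_of_notMem h, Set.indicator_of_notMem (fun h' => h (this.1 h'))]

lemma shift_int' (f : EuclideanSpace ℝ (Fin n) → ℝ) (z : EuclideanSpace ℝ (Fin n)) (r : ℝ) :
    ∫⁻ s in Metric.ball 0 r, ‖f (z - s)‖ₑ = ∫⁻ y in Metric.ball z r, ‖f y‖ₑ := by
  rw [← lintegral_indicator measurableSet_ball, ← lintegral_indicator measurableSet_ball,
    
    ← lintegral_sub_left_eq_self ((Metric.ball z r).indicator fun y => ‖f y‖ₑ) z]
  apply lintegral_congr
  intro s
  have : z - s ∈ Metric.ball z r ↔ s ∈ Metric.ball 0 r := by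
    simp [Metric.mem_ball, dist_eq_norm]
  by_cases h : s ∈ Metric.ball (0 : EuclideanSpace ℝ (Fin n)) r
  · rw [Set.indicator_of_mem h, Set.indicator_of_mem (this.2 h)]
  · rw [Set.indicator_of_notMem h, Set.indicator_of_notMem (fun h' => h (this.1 h'))]

lemma vol_ball_scale (c d : EuclideanSpace ℝ (Fin n)) {a : ℝ} (ha : 0 < a) (r : ℝ) :
    volume (Metric.ball c (a * r)) = ENNReal.ofReal (a ^ n) * volume (Metric.ball d r) := by
  rw [Measure.addHaar_ball_mul_of_pos volume c ha r, Measure.addHaar_ball_center volume d r]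
  simp

lemma maxFn_moll (φ : ContDiffBump (0 : EuclideanSpace ℝ (Fin n))) (hφ : φ.rOut = 2 * φ.rIn)
    {f : EuclideanSpace ℝ (Fin n) → ℝ} (hf : LocallyIntegrable f volume)
    (x : EuclideanSpace ℝ (Fin n)) :
    maxFn (moll φ f) x ≤ ENNReal.ofReal (4 ^ n) * maxFn f x := by
  set ρ : EuclideanSpace ℝ (Fin n) → ℝ := φ.normed volume with hρ
  have hm : ∀ z, ‖moll φ f z‖ₑ ≤ ∫⁻ s, ‖ρ s • f (z - s)‖ₑ := by
    intro z
    exact enorm_integral_le_lintegral_enorm _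
  have hρ1 : ∫⁻ s, ‖ρ s‖ₑ = 1 := by
    have h := ofReal_integral_eq_lintegral_ofReal (φ.integrable_normed (μ := volume))
      (Filter.Eventually.of_forall fun s => φ.nonneg_normed s)
    rw [φ.integral_normed, ENNReal.ofReal_one] at h
    rw [h]
    apply lintegral_congr
    intro s
    rw [Real.enorm_of_nonneg (φ.nonneg_normed s)]
  have hsupp : ∀ s, s ∉ Metric.ball (0 : EuclideanSpace ℝ (Fin n)) φ.rOut → ρ s = 0 := by
    intro s hs
    have h := φ.support_normed_eq (μ := volume)
    by_contra hne
    exact hs (h ▸ (Function.mem_support.2 hne))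
  have hδ := φ.rOut_pos
  set δ := φ.rOut with hδdef
  apply maxFn_le
  intro c r hx
  have hr := Metric.pos_of_mem_ball hx
  rcases le_or_gt δ r with hcase | hcase
  · have hbound : ∀ s, ‖ρ s‖ₑ * ∫⁻ z in Metric.ball c r, ‖f (z - s)‖ₑ
        ≤ ‖ρ s‖ₑ * ∫⁻ y in Metric.ball c (2 * r), ‖f y‖ₑ := by
      intro s
      by_cases hs : s ∈ Metric.ball (0 : EuclideanSpace ℝ (Fin n)) δ
      · refine mul_le_mul_right ?_ _
        rw [shift_int]
        apply lintegral_mono_set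
        apply Metric.ball_subset_ball'
        rw [mem_ball_zero_iff] at hs
        rw [dist_eq_norm]
        simp
        linarith
      · simp [hsupp s hs]
    have hmeas : AEMeasurable (Function.uncurry fun z s : EuclideanSpace ℝ (Fin n) =>
        ‖ρ s • f (z - s)‖ₑ) ((volume.restrict (Metric.ball c r)).prod volume) := by
      have h1 : AEStronglyMeasurable (fun p : EuclideanSpace ℝ (Fin n) × EuclideanSpace ℝ (Fin n) =>
          (ContinuousLinearMap.lsmul ℝ ℝ : ℝ →L[ℝ] ℝ →L[ℝ] ℝ) (ρ p.2) (f (p.1 - p.2)))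
          (volume.prod volume) :=
        AEStronglyMeasurable.convolution_integrand _
          φ.continuous_normed.aestronglyMeasurable hf.aestronglyMeasurable
      exact (h1.enorm).mono_ac (Measure.AbsolutelyContinuous.prod
        Measure.absolutelyContinuous_restrict Measure.AbsolutelyContinuous.rfl)
    calc ∫⁻ z in Metric.ball c r, ‖moll φ f z‖ₑ
        ≤ ∫⁻ z in Metric.ball c r, ∫⁻ s, ‖ρ s • f (z - s)‖ₑ := lintegral_mono hm
      _ = ∫⁻ s, ∫⁻ z in Metric.ball c r, ‖ρ s • f (z - s)‖ₑ := lintegral_lintegral_swap hmeas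
      _ = ∫⁻ s, ‖ρ s‖ₑ * ∫⁻ z in Metric.ball c r, ‖f (z - s)‖ₑ := by
          apply lintegral_congr
          intro s
          simp only [enorm_smul]
          rw [lintegral_const_mul' _ _ enorm_ne_top]
      _ ≤ ∫⁻ s, ‖ρ s‖ₑ * ∫⁻ y in Metric.ball c (2 * r), ‖f y‖ₑ := lintegral_mono hbound
      _ = ∫⁻ y in Metric.ball c (2 * r), ‖f y‖ₑ := by
          rw [lintegral_mul_const _ (φ.continuous_normed.enorm.measurable), hρ1, one_mul]
      _ ≤ volume (Metric.ball c (2 * r)) * maxFn f x :=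
          setLIntegral_le_maxFn f (Metric.ball_subset_ball (by linarith) hx)
      _ = ENNReal.ofReal (2 ^ n) * volume (Metric.ball c r) * maxFn f x := by
          rw [vol_ball_scale c c two_pos r]
      _ ≤ ENNReal.ofReal (4 ^ n) * volume (Metric.ball c r) * maxFn f x := by
          gcongr; norm_num
      _ = _ := by ring
  · have hρle : ∀ s, ‖ρ s‖ₑ ≤ (volume (Metric.ball (0 : EuclideanSpace ℝ (Fin n)) φ.rIn))⁻¹ := by
      intro s
      have h := φ.normed_le_div_measure_closedBall_rIn (volume) s
      rw [Real.enorm_of_nonneg (φ.nonneg_normed s)]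
      rw [Measure.real] at h
      have h0 : volume (Metric.closedBall (0 : EuclideanSpace ℝ (Fin n)) φ.rIn) ≠ 0 :=
        (Metric.measure_closedBall_pos volume _ φ.rIn_pos).ne'
      refine (ENNReal.ofReal_le_ofReal h).trans ?_
      rw [one_div, ENNReal.ofReal_inv_of_pos (ENNReal.toReal_pos h0 measure_closedBall_lt_top.ne),
        ENNReal.ofReal_toReal measure_closedBall_lt_top.ne]
      exact ENNReal.inv_le_inv.2 (measure_mono Metric.ball_subset_closedBall)
    have hpt : ∀ z ∈ Metric.ball c r, ‖moll φ f z‖ₑ ≤ ENNReal.ofReal (4 ^ n) * maxFn f x := by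
      intro z hz
      have h0 : volume (Metric.ball (0 : EuclideanSpace ℝ (Fin n)) φ.rIn) ≠ 0 :=
        (Metric.measure_ball_pos volume _ φ.rIn_pos).ne'
      have hxz : x ∈ Metric.ball z (2 * δ) := by
        rw [Metric.mem_ball] at *
        have := dist_triangle_right x z c
        linarith
      calc ‖moll φ f z‖ₑ ≤ ∫⁻ s, ‖ρ s • f (z - s)‖ₑ := hm z
        _ = ∫⁻ s in Metric.ball 0 δ, ‖ρ s • f (z - s)‖ₑ := by
            rw [← lintegral_indicator measurableSet_ball]
            apply lintegral_congr
            intro s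
            by_cases hs : s ∈ Metric.ball (0 : EuclideanSpace ℝ (Fin n)) δ
            · rw [Set.indicator_of_mem hs]
            · rw [Set.indicator_of_notMem hs, hsupp s hs]; simp
        _ ≤ ∫⁻ s in Metric.ball 0 δ,
              (volume (Metric.ball (0 : EuclideanSpace ℝ (Fin n)) φ.rIn))⁻¹ * ‖f (z - s)‖ₑ := by
            apply lintegral_mono
            intro s
            simp only [enorm_smul]
            gcongr
            exact hρle s
        _ = (volume (Metric.ball (0 : EuclideanSpace ℝ (Fin n)) φ.rIn))⁻¹ *
              ∫⁻ y in Metric.ball z δ, ‖f y‖ₑ := by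
            rw [lintegral_const_mul' _ _ (ENNReal.inv_ne_top.2 h0), shift_int']
        _ ≤ (volume (Metric.ball (0 : EuclideanSpace ℝ (Fin n)) φ.rIn))⁻¹ *
              ∫⁻ y in Metric.ball z (2 * δ), ‖f y‖ₑ := by
            gcongr
            linarith
        _ ≤ (volume (Metric.ball (0 : EuclideanSpace ℝ (Fin n)) φ.rIn))⁻¹ *
              (volume (Metric.ball z (2 * δ)) * maxFn f x) := by
            gcongr
            exact setLIntegral_le_maxFn f hxz
        _ = ENNReal.ofReal (4 ^ n) * maxFn f x := by
            have e : 2 * δ = 4 * φ.rIn := by rw [hφ]; ring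
            rw [e, vol_ball_scale z 0 (by norm_num : (0 : ℝ) < 4) φ.rIn, mul_comm (ENNReal.ofReal _),
              mul_assoc, ← mul_assoc, ENNReal.inv_mul_cancel h0 measure_ball_lt_top.ne, one_mul]
    calc ∫⁻ z in Metric.ball c r, ‖moll φ f z‖ₑ
        ≤ ∫⁻ z in Metric.ball c r, ENNReal.ofReal (4 ^ n) * maxFn f x :=
          setLIntegral_mono' measurableSet_ball hpt
      _ = _ := by rw [setLIntegral_const, mul_comm]

lemma mem_mIdxLe {d : ℕ} {α : Fin n → ℕ} : α ∈ mIdxLe n d ↔ ∑ i, α i ≤ d := by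
  unfold mIdxLe
  simp only [Finset.mem_filter, Finset.mem_image, Finset.mem_univ, true_and, and_iff_right_iff_imp]
  intro h
  refine ⟨fun i => ⟨α i, ?_⟩, rfl⟩
  have := Finset.single_le_sum (f := α) (fun _ _ => Nat.zero_le _) (Finset.mem_univ i)
  omega

lemma lhs_eq (V : (Fin n → ℕ) → EuclideanSpace ℝ (Fin n) → ℝ) (N : ℕ)
    (x y : EuclideanSpace ℝ (Fin n)) (R : ℝ) :
    ∑ α ∈ mIdxLe n N,
      (Nat.factorial (2 * N - (∑ i, α i)) : ℝ) /
        ((Nat.factorial (N - (∑ i, α i)) : ℝ) * ∏ i, (Nat.factorial (α i) : ℝ)) *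
        (∏ i, (y i - x i) ^ (α i)) / R * ((-1 : ℝ) ^ (∑ i, α i) * V α y - V α x)
      = Lf V N x y / R := by
  have h1 : Lf V N x y = ∑ k ∈ Finset.range (N + 1), cf N k *
      ((-1) ^ k * Lam V y (lin (y - x) ^ k) - Lam V x (lin (y - x) ^ k)) := by
    unfold Lf
    symm
    apply Finset.sum_subset
    · intro k hk; simp at hk ⊢; omega
    · intro k hk hk2
      simp at hk hk2
      rw [cf_zero (by omega) (by omega), zero_mul]
  rw [h1, Finset.sum_div, ← Finset.sum_fiberwise_of_maps_to
    (g := fun α : Fin n → ℕ => ∑ i, α i) (t := Finset.range (N + 1))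
    (fun α hα => by simpa [Nat.lt_succ_iff] using mem_mIdxLe.1 hα)]
  apply Finset.sum_congr rfl
  intro k hk
  have hk' : k ≤ N := by simp at hk; omega
  have hset : (mIdxLe n N).filter (fun α => ∑ i, α i = k)
      = (Finset.univ : Finset (Fin n)).piAntidiag k := by
    ext α
    simp only [Finset.mem_filter, mem_mIdxLe, Finset.mem_piAntidiag, Finset.mem_univ,
      implies_true, and_true]
    constructor
    · exact fun h => h.2
    · exact fun h => ⟨h.trans_le hk', h⟩
  rw [hset, lam_lin_pow, lam_lin_pow, Finset.mul_sum, ← Finset.sum_sub_distrib, Finset.mul_sum,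
    Finset.sum_div]
  apply Finset.sum_congr rfl
  intro α hα
  have hs : ∑ i, α i = k := by simpa using hα
  rw [hs, cf_eq hk']
  have hspec := Nat.multinomial_spec Finset.univ α
  rw [hs] at hspec
  have hspec' : (∏ i, ((α i).factorial : ℝ)) * (Nat.multinomial Finset.univ α : ℝ)
      = (k.factorial : ℝ) := by exact_mod_cast hspec
  have hP : (∏ i, ((α i).factorial : ℝ)) ≠ 0 := by
    apply Finset.prod_ne_zero_iff.2
    intro i _; exact_mod_cast Nat.factorial_ne_zero _
  have hM : (Nat.multinomial Finset.univ α : ℝ) ≠ 0 := by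
    intro h0; rw [h0, mul_zero] at hspec'
    exact absurd hspec'.symm (by exact_mod_cast Nat.factorial_ne_zero k)
  have hN : ((N - k).factorial : ℝ) ≠ 0 := by exact_mod_cast Nat.factorial_ne_zero _
  rw [← hspec']
  simp only [PiLp.sub_apply]
  by_cases hR : R = 0
  · simp [hR]
  field_simp

lemma Lf_tendsto {V : ℕ → (Fin n → ℕ) → EuclideanSpace ℝ (Fin n) → ℝ}
    {U : (Fin n → ℕ) → EuclideanSpace ℝ (Fin n) → ℝ} {N : ℕ} {x y : EuclideanSpace ℝ (Fin n)}
    (hx : ∀ α : Fin n → ℕ, ∑ i, α i ≤ 2 * N + 1 →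
      Filter.Tendsto (fun i => V i α x) Filter.atTop (nhds (U α x)))
    (hy : ∀ α : Fin n → ℕ, ∑ i, α i ≤ 2 * N + 1 →
      Filter.Tendsto (fun i => V i α y) Filter.atTop (nhds (U α y))) :
    Filter.Tendsto (fun i => Lf (V i) N x y) Filter.atTop (nhds (Lf U N x y)) := by
  unfold Lf
  apply tendsto_finsetSum
  intro k hk
  have hk' : k ≤ 2 * N := by simp at hk; omega
  simp only [lam_lin_pow]
  apply Filter.Tendsto.const_mul
  apply Filter.Tendsto.sub
  · apply Filter.Tendsto.const_mul
    apply tendsto_finsetSum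
    intro α hα
    have hs : ∑ i, α i = k := by simpa using hα
    exact (hy α (by omega)).const_mul _
  · apply tendsto_finsetSum
    intro α hα
    have hs : ∑ i, α i = k := by simpa using hα
    exact (hx α (by omega)).const_mul _

lemma maxFn_mono {f g : EuclideanSpace ℝ (Fin n) → ℝ} (h : ∀ z, |f z| ≤ g z)
    (x : EuclideanSpace ℝ (Fin n)) : maxFn f x ≤ maxFn g x := by
  apply maxFn_le
  intro c r hx
  refine le_trans (lintegral_mono fun z => ?_) (setLIntegral_le_maxFn g hx)
  rw [← ofReal_norm, ← ofReal_norm]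
  exact ENNReal.ofReal_le_ofReal ((h z).trans (le_abs_self _))

lemma maxFn_sum {ι : Type*} (s : Finset ι) (f : ι → EuclideanSpace ℝ (Fin n) → ℝ)
    (hf : ∀ i ∈ s, Continuous (f i)) (x : EuclideanSpace ℝ (Fin n)) :
    maxFn (fun z => ∑ i ∈ s, |f i z|) x ≤ ∑ i ∈ s, maxFn (f i) x := by
  apply maxFn_le
  intro c r hx
  calc _ ≤ ∫⁻ z in Metric.ball c r, ∑ i ∈ s, ‖f i z‖ₑ := by
        apply lintegral_mono
        intro z
        refine (enorm_sum_le _ _).trans (le_of_eq ?_)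
        simp
    _ = ∑ i ∈ s, ∫⁻ z in Metric.ball c r, ‖f i z‖ₑ :=
        lintegral_finsetSum' _ fun i hi => (hf i hi).enorm.measurable.aemeasurable
    _ ≤ ∑ i ∈ s, volume (Metric.ball c r) * maxFn (f i) x :=
        Finset.sum_le_sum fun i _ => setLIntegral_le_maxFn (f i) hx
    _ = _ := by rw [Finset.mul_sum]

/-- The mollifiers. -/
noncomputable def bump (n : ℕ) (i : ℕ) : ContDiffBump (0 : EuclideanSpace ℝ (Fin n)) where
  rIn := 1 / ((i : ℝ) + 1)
  rOut := 2 * (1 / ((i : ℝ) + 1))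
  rIn_pos := by positivity
  rIn_lt_rOut := by
    have : 0 < 1 / ((i : ℝ) + 1) := by positivity
    linarith

lemma moll_tendsto {f : EuclideanSpace ℝ (Fin n) → ℝ} (hf : LocallyIntegrable f volume) :
    ∀ᵐ x, Filter.Tendsto (fun i => moll (bump n i) f x) Filter.atTop (nhds (f x)) := by
  unfold moll
  apply ContDiffBump.ae_convolution_tendsto_right_of_locallyIntegrable (K := 2) _ _ hf
  · have h : Filter.Tendsto (fun i : ℕ => 2 * (1 / ((i : ℝ) + 1))) Filter.atTop (nhds (2 * 0)) :=
      (tendsto_one_div_add_atTop_nhds_zero_nat (𝕜 := ℝ)).const_mul 2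
    rw [mul_zero] at h
    exact h
  · exact Filter.Eventually.of_forall fun i => le_rfl

lemma final_est {N : ℕ} {U : (Fin n → ℕ) → EuclideanSpace ℝ (Fin n) → ℝ}
    (hU : ∀ α : Fin n → ℕ, (∑ i, α i) ≤ 2 * N + 1 → LocallyIntegrable (U α) volume)
    (hW : ∀ (α : Fin n → ℕ) (i : Fin n), (∑ j, α j) < 2 * N + 1 →
        IsWeakDeriv i (U α) (U (α + Pi.single i 1)))
    {G : EuclideanSpace ℝ (Fin n) → ℝ}
    (hG : ∀ α : Fin n → ℕ, ∑ i, α i = 2 * N + 1 → ∀ z, |U α z| ≤ G z)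
    {x y : EuclideanSpace ℝ (Fin n)} (hxy : x ≠ y)
    (hx : ∀ α : Fin n → ℕ, ∑ i, α i ≤ 2 * N + 1 →
      Filter.Tendsto (fun i => moll (bump n i) (U α) x) Filter.atTop (nhds (U α x)))
    (hy : ∀ α : Fin n → ℕ, ∑ i, α i ≤ 2 * N + 1 →
      Filter.Tendsto (fun i => moll (bump n i) (U α) y) Filter.atTop (nhds (U α y))) :
    ENNReal.ofReal |Lf U N x y| ≤ ENNReal.ofReal (C0 n N * ‖y - x‖ ^ (2 * N + 1)) *
      (ENNReal.ofReal (((Finset.univ : Finset (Fin n)).piAntidiag (2 * N + 1)).card * 4 ^ n) *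
        (maxFn G x + maxFn G y)) := by
  set S := (Finset.univ : Finset (Fin n)).piAntidiag (2 * N + 1) with hS
  have hSm : ∀ α : Fin n → ℕ, α ∈ S ↔ ∑ i, α i = 2 * N + 1 := by
    intro α; simp [hS]
  have hlim : Filter.Tendsto (fun i => ENNReal.ofReal
      |Lf (fun α => moll (bump n i) (U α)) N x y|) Filter.atTop
      (nhds (ENNReal.ofReal |Lf U N x y|)) :=
    ENNReal.tendsto_ofReal (Lf_tendsto hx hy).abs
  refine le_of_tendsto' hlim fun i => ?_
  have hsm := moll_smooth (bump n i) hU hW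
  have hcont : ∀ α ∈ S, Continuous (moll (bump n i) (U α)) := fun α hα =>
    hsm.cont α ((hSm α).1 hα).le
  have hest := smooth_est hsm (g := fun z => ∑ α ∈ S, |moll (bump n i) (U α) z|)
    (continuous_finsetSum _ fun α hα => (hcont α hα).abs)
    (fun w α hα => Finset.single_le_sum (f := fun α => |moll (bump n i) (U α) w|)
      (fun _ _ => abs_nonneg _) ((hSm α).2 hα))
    (fun w => Finset.sum_nonneg fun _ _ => abs_nonneg _) x y hxy
  have hM : ∀ w, maxFn (fun z => ∑ α ∈ S, |moll (bump n i) (U α) z|) w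
      ≤ ENNReal.ofReal (S.card * 4 ^ n) * maxFn G w := by
    intro w
    calc _ ≤ ∑ α ∈ S, maxFn (moll (bump n i) (U α)) w := maxFn_sum S _ hcont w
      _ ≤ ∑ α ∈ S, ENNReal.ofReal (4 ^ n) * maxFn G w := by
          apply Finset.sum_le_sum
          intro α hα
          have hα' := (hSm α).1 hα
          refine (maxFn_moll (bump n i) rfl (hU α hα'.le) w).trans ?_
          gcongr
          exact maxFn_mono (hG α hα') w
      _ = _ := by
          rw [Finset.sum_const, nsmul_eq_mul, ENNReal.ofReal_mul (by positivity),
            ENNReal.ofReal_natCast, mul_assoc]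
  refine hest.trans ?_
  rw [mul_add (ENNReal.ofReal (S.card * 4 ^ n))]
  gcongr
  · exact hM x
  · exact hM y

end aux

/-- Pointwise estimate for the higher-order difference quotient of a function
u ∈ W^{2ℓ−1,1}_loc(ℝⁿ) (whose weak derivatives D^α u are encoded by the family U,
u = U 0) in terms of the maximal function of |∇^{2ℓ−1}u|. -/
theorem stmt15 {n : ℕ} (hn : 1 ≤ n) (ℓ : ℕ) (hℓ : 1 ≤ ℓ) :
    ∃ C : ℝ, 0 < C ∧
      ∀ (U : (Fin n → ℕ) → EuclideanSpace ℝ (Fin n) → ℝ),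
      (∀ α : Fin n → ℕ, (∑ i, α i) ≤ 2*ℓ-1 → LocallyIntegrable (U α) volume) →
      (∀ (α : Fin n → ℕ) (i : Fin n), (∑ j, α j) < 2*ℓ-1 →
        IsWeakDeriv i (U α) (U (α + Pi.single i 1))) →
      ∀ G : EuclideanSpace ℝ (Fin n) → ℝ,
      (G = fun z => Real.sqrt (∑ α ∈ (mIdxLe n (2*ℓ-1)).filter
          (fun α => (∑ i, α i) = 2*ℓ-1), (U α z)^2)) →
      ∀ᵐ (p : EuclideanSpace ℝ (Fin n) × EuclideanSpace ℝ (Fin n)) ∂((volume : Measure (EuclideanSpace ℝ (Fin n))).prod volume),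
        ENNReal.ofReal
            |∑ α ∈ mIdxLe n (ℓ-1),
              (Nat.factorial (2*ℓ-2-(∑ i, α i)) : ℝ) /
                  ((Nat.factorial (ℓ-1-(∑ i, α i)) : ℝ) *
                    ∏ i, (Nat.factorial (α i) : ℝ)) *
                (∏ i, (p.2 i - p.1 i) ^ (α i)) / ‖p.2 - p.1‖ ^ (2*ℓ-1) *
                ((-1:ℝ) ^ (∑ i, α i) * U α p.2 - U α p.1)|
          ≤ ENNReal.ofReal C * (maxFn G p.1 + maxFn G p.2) := by
  obtain ⟨N, rfl⟩ : ∃ N, ℓ = N + 1 := ⟨ℓ - 1, by omega⟩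
  have e1 : 2 * (N + 1) - 1 = 2 * N + 1 := by omega
  have e2 : 2 * (N + 1) - 2 = 2 * N := by omega
  have e3 : N + 1 - 1 = N := by omega
  simp only [e1, e2, e3]
  set D : ℝ := (((Finset.univ : Finset (Fin n)).piAntidiag (2 * N + 1)).card * 4 ^ n : ℝ) with hD
  have hD0 : 0 ≤ D := by positivity
  have hC0 := C0_nonneg n N
  refine ⟨C0 n N * D + 1, by positivity, ?_⟩
  intro U hU hW G hGdef
  have hG : ∀ α : Fin n → ℕ, ∑ i, α i = 2 * N + 1 → ∀ z, |U α z| ≤ G z := by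
    intro α hα z
    rw [hGdef]
    apply Real.abs_le_sqrt
    apply Finset.single_le_sum (f := fun α => (U α z) ^ 2) (fun _ _ => sq_nonneg _)
    rw [Finset.mem_filter, mem_mIdxLe]
    exact ⟨hα.le, hα⟩
  have hae : ∀ᵐ x : EuclideanSpace ℝ (Fin n), ∀ α : Fin n → ℕ, ∑ i, α i ≤ 2 * N + 1 →
      Filter.Tendsto (fun i => moll (bump n i) (U α) x) Filter.atTop (nhds (U α x)) := by
    rw [ae_all_iff]
    intro α
    by_cases hα : ∑ i, α i ≤ 2 * N + 1
    · filter_upwards [moll_tendsto (hU α hα)] with x hx _ using hx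
    · exact Filter.Eventually.of_forall fun x h => absurd h hα
  filter_upwards [Measure.quasiMeasurePreserving_fst.ae hae,
    Measure.quasiMeasurePreserving_snd.ae hae] with p hp1 hp2
  rw [lhs_eq]
  by_cases hxy : p.1 = p.2
  · simp [hxy]
  have hr : 0 < ‖p.2 - p.1‖ := norm_pos_iff.2 (sub_ne_zero.2 (Ne.symm hxy))
  have hest := final_est hU hW hG hxy hp1 hp2
  rw [← hD] at hest
  have hrp : 0 < ‖p.2 - p.1‖ ^ (2 * N + 1) := by positivity
  rw [abs_div, abs_of_pos hrp, ENNReal.ofReal_div_of_pos hrp]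
  apply ENNReal.div_le_of_le_mul
  refine hest.trans ?_
  calc _ = ENNReal.ofReal (C0 n N * D) * (maxFn G p.1 + maxFn G p.2) *
        ENNReal.ofReal (‖p.2 - p.1‖ ^ (2 * N + 1)) := by
        rw [ENNReal.ofReal_mul hC0, ENNReal.ofReal_mul hC0]; ring
    _ ≤ _ := by
        gcongr
        linarith
end

section
/- Let 1 ≤ p ≤ q ≤ ∞, β > 1/q, γ > 0 with (1/γ)(1/q − β) + 1 − 1/p = 0. Then there exists C = C(p,q,β,γ) such that ‖ s^{−β} ∫_0^{s^γ} f(r) dr ‖_{L^q(0,∞)} ≤ C ‖f‖_{L^p(0,∞)} for every nonnegative measurable f on (0,∞). -/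
open Set MeasureTheory
open scoped ENNReal

lemma hardy_aux_pow (t e : ℝ) (ht : 0 < t) (he : -1 < e) :
    ∫⁻ r in Ioo (0:ℝ) t, ENNReal.ofReal (r ^ e) = ENNReal.ofReal (t ^ (e+1) / (e+1)) := by
  rw [← ofReal_integral_eq_lintegral_ofReal]
  · congr 1
    rw [← integral_Ioc_eq_integral_Ioo, ← intervalIntegral.integral_of_le ht.le,
      integral_rpow (Or.inl he), Real.zero_rpow (by linarith), sub_zero]
  · have := (intervalIntegral.intervalIntegrable_rpow' (a := 0) (b := t) he)
    rw [intervalIntegrable_iff_integrableOn_Ioo_of_le ht.le] at this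
    exact this
  · filter_upwards [ae_restrict_mem measurableSet_Ioo] with r hr
    exact Real.rpow_nonneg hr.1.le _

lemma hardy_aux_tail (b d : ℝ) (hb : 0 < b) (hd : 0 < d) :
    ∫⁻ s in Ioi b, ENNReal.ofReal (s ^ (-1 - d)) = ENNReal.ofReal (b ^ (-d) / d) := by
  rw [← ofReal_integral_eq_lintegral_ofReal]
  · congr 1
    rw [integral_Ioi_rpow_of_lt (by linarith) hb]
    have : -1 - d + 1 = -d := by ring
    rw [this, neg_div_neg_eq]
  · exact integrableOn_Ioi_rpow_of_lt (by linarith) hb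
  · filter_upwards [ae_restrict_mem measurableSet_Ioi] with r hr
    exact Real.rpow_nonneg (hb.le.trans (le_of_lt hr)) _

lemma hardy_aux_holder (P t : ℝ) (hP : 1 < P) (ht : 0 < t) (g : ℝ → ℝ≥0∞) (hg : Measurable g) :
    (∫⁻ r in Ioo (0:ℝ) t, g r) ^ P ≤
      ENNReal.ofReal ((P / (P-1)) ^ (P-1) * t ^ ((P-1)^2/P)) *
        ∫⁻ r in Ioo (0:ℝ) t, g r ^ P * ENNReal.ofReal (r ^ ((P-1)/P)) := by
  have hP0 : 0 < P := by linarith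
  have hP1 : 0 < P - 1 := by linarith
  have hc : P.HolderConjugate (P / (P-1)) := Real.HolderConjugate.conjExponent hP
  have h := ENNReal.lintegral_mul_le_Lp_mul_Lq (volume.restrict (Ioo (0:ℝ) t)) hc
    (f := fun r => g r * ENNReal.ofReal (r ^ ((P-1)/P^2)))
    (g := fun r => ENNReal.ofReal (r ^ (-((P-1)/P^2)))) (by fun_prop) (by fun_prop)
  have e0 : ∫⁻ r in Ioo (0:ℝ) t, g r = ∫⁻ r in Ioo (0:ℝ) t,
      ((fun r => g r * ENNReal.ofReal (r ^ ((P-1)/P^2))) *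
        (fun r => ENNReal.ofReal (r ^ (-((P-1)/P^2))))) r := by
    refine setLIntegral_congr_fun measurableSet_Ioo fun r hr => ?_
    simp only [Pi.mul_apply]
    rw [mul_assoc, ← ENNReal.ofReal_mul (Real.rpow_nonneg hr.1.le _), ← Real.rpow_add hr.1]
    simp
  have e1 : ∫⁻ r in Ioo (0:ℝ) t, (g r * ENNReal.ofReal (r ^ ((P-1)/P^2))) ^ P =
      ∫⁻ r in Ioo (0:ℝ) t, g r ^ P * ENNReal.ofReal (r ^ ((P-1)/P)) := by
    refine setLIntegral_congr_fun measurableSet_Ioo fun r hr => ?_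
    rw [ENNReal.mul_rpow_of_nonneg _ _ hP0.le, ENNReal.ofReal_rpow_of_nonneg
      (Real.rpow_nonneg hr.1.le _) hP0.le, ← Real.rpow_mul hr.1.le]
    congr 3
    field_simp
  have e2 : ∫⁻ r in Ioo (0:ℝ) t, (ENNReal.ofReal (r ^ (-((P-1)/P^2)))) ^ (P/(P-1)) =
      ENNReal.ofReal (P/(P-1) * t ^ ((P-1)/P)) := by
    have : ∫⁻ r in Ioo (0:ℝ) t, (ENNReal.ofReal (r ^ (-((P-1)/P^2)))) ^ (P/(P-1)) =
      ∫⁻ r in Ioo (0:ℝ) t, ENNReal.ofReal (r ^ (-(1/P))) := by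
      refine setLIntegral_congr_fun measurableSet_Ioo fun r hr => ?_
      rw [ENNReal.ofReal_rpow_of_nonneg
        (Real.rpow_nonneg hr.1.le _) (by positivity), ← Real.rpow_mul hr.1.le]
      congr 2
      field_simp
    rw [this, hardy_aux_pow t _ ht (by
      have : 1 / P < 1 := by rw [div_lt_one hP0]; exact hP
      linarith)]
    have : -(1/P) + 1 = (P-1)/P := by field_simp; ring
    rw [this]
    congr 1
    field_simp
  rw [← e0, e1, e2] at h
  refine (ENNReal.rpow_le_rpow h hP0.le).trans (le_of_eq ?_)
  rw [ENNReal.mul_rpow_of_nonneg _ _ hP0.le, ← ENNReal.rpow_mul, ← ENNReal.rpow_mul,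
    one_div_mul_cancel hP0.ne', ENNReal.rpow_one, mul_comm]
  congr 1
  have : 1 / (P/(P-1)) * P = P - 1 := by field_simp
  rw [this, ENNReal.ofReal_rpow_of_nonneg (by positivity) hP1.le,
    Real.mul_rpow (by positivity) (by positivity), ← Real.rpow_mul ht.le]
  congr 3
  field_simp

lemma hardy_aux_tonelli (γ : ℝ) (hγ : 0 < γ) (h k : ℝ → ℝ≥0∞) (hh : Measurable h)
    (hk : Measurable k) :
    ∫⁻ s in Ioi (0:ℝ), h s * ∫⁻ r in Ioo (0:ℝ) (s ^ γ), k r =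
      ∫⁻ r in Ioi (0:ℝ), k r * ∫⁻ s in Ioi (r ^ (1/γ)), h s := by
  have hS : MeasurableSet {z : ℝ × ℝ | z.2 < z.1 ^ γ} :=
    measurableSet_lt (by fun_prop) (by fun_prop)
  have hm : Measurable (fun z : ℝ × ℝ => {z : ℝ × ℝ | z.2 < z.1 ^ γ}.indicator
      (fun z => h z.1 * k z.2) z) := Measurable.indicator (by fun_prop) hS
  have hsw := lintegral_lintegral_swap (μ := volume.restrict (Ioi (0:ℝ)))
    (ν := volume.restrict (Ioi (0:ℝ)))
    (f := fun s r => {z : ℝ × ℝ | z.2 < z.1 ^ γ}.indicator (fun z => h z.1 * k z.2) (s, r))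
    hm.aemeasurable
  refine Eq.trans ?_ (hsw.trans ?_)
  · refine setLIntegral_congr_fun measurableSet_Ioi fun s hs => ?_
    rw [← lintegral_const_mul _ hk]
    have : Ioo (0:ℝ) (s^γ) = Iio (s^γ) ∩ Ioi 0 := by ext; simp [and_comm]
    rw [this, ← Measure.restrict_restrict measurableSet_Iio,
      ← lintegral_indicator measurableSet_Iio]
    rfl
  · refine setLIntegral_congr_fun measurableSet_Ioi fun r hr => ?_
    have hr' : 0 < r := hr
    rw [← lintegral_const_mul _ hh]
    have : Ioi (r ^ (1/γ)) = Ioi (r ^ (1/γ)) ∩ Ioi 0 := by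
      ext x
      simp only [mem_Ioi, mem_inter_iff]
      exact ⟨fun hx => ⟨hx, (Real.rpow_nonneg hr'.le _).trans_lt hx⟩, fun hx => hx.1⟩
    rw [this, ← Measure.restrict_restrict measurableSet_Ioi,
      ← lintegral_indicator (s := Ioi (r ^ (1/γ))) measurableSet_Ioi]
    refine setLIntegral_congr_fun measurableSet_Ioi fun s hs => ?_
    have hs' : 0 < s := hs
    have key : r < s ^ γ ↔ r ^ (1/γ) < s := by
      rw [one_div, Real.rpow_inv_lt_iff_of_pos hr'.le hs'.le hγ]
    by_cases hx : r < s ^ γ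
    · rw [indicator_of_mem (s := {z : ℝ × ℝ | z.2 < z.1 ^ γ}) hx,
        indicator_of_mem (s := Ioi (r ^ (1/γ))) (key.1 hx), mul_comm]
    · have h2 : ¬ (r ^ (1/γ) < s) := fun h => hx (key.2 h)
      rw [indicator_of_notMem (s := {z : ℝ × ℝ | z.2 < z.1 ^ γ}) hx,
        indicator_of_notMem (s := Ioi (r ^ (1/γ))) h2]

lemma hardy_aux_main (P γ : ℝ) (hP : 1 < P) (hγ : 0 < γ) (g : ℝ → ℝ≥0∞) (hg : Measurable g) :
    ∫⁻ s in Ioi (0:ℝ), ENNReal.ofReal (s ^ (-1 - γ * (P-1))) *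
        (∫⁻ r in Ioo (0:ℝ) (s ^ γ), g r) ^ P ≤
      ENNReal.ofReal ((P / (P-1)) ^ (P-1) * (1 / (γ * (P-1) / P))) *
        ∫⁻ r in Ioi (0:ℝ), g r ^ P := by
  have hP0 : 0 < P := by linarith
  have hP1 : 0 < P - 1 := by linarith
  calc _ ≤ ∫⁻ s in Ioi (0:ℝ), ENNReal.ofReal ((P / (P-1)) ^ (P-1)) *
        (ENNReal.ofReal (s ^ (-1 - γ * (P-1) / P)) *
        ∫⁻ r in Ioo (0:ℝ) (s ^ γ), g r ^ P * ENNReal.ofReal (r ^ ((P-1)/P))) := by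
        refine setLIntegral_mono' measurableSet_Ioi fun s hs => ?_
        have hs' : 0 < s := hs
        refine (mul_le_mul_right (hardy_aux_holder P _ hP (Real.rpow_pos_of_pos hs' γ) g hg) _).trans
          (le_of_eq ?_)
        rw [← mul_assoc, ← mul_assoc, ← ENNReal.ofReal_mul (by positivity),
          ← ENNReal.ofReal_mul (by positivity)]
        congr 2
        rw [mul_left_comm, ← Real.rpow_mul hs'.le, ← Real.rpow_add hs']
        congr 2
        field_simp
        ring
    _ = ENNReal.ofReal ((P / (P-1)) ^ (P-1)) * ∫⁻ s in Ioi (0:ℝ),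
        (ENNReal.ofReal (s ^ (-1 - γ * (P-1) / P)) *
        ∫⁻ r in Ioo (0:ℝ) (s ^ γ), g r ^ P * ENNReal.ofReal (r ^ ((P-1)/P))) := by
        rw [lintegral_const_mul' _ _ ENNReal.ofReal_ne_top]
    _ = ENNReal.ofReal ((P / (P-1)) ^ (P-1)) * ∫⁻ r in Ioi (0:ℝ),
        ENNReal.ofReal (1 / (γ * (P-1) / P)) * g r ^ P := by
        rw [hardy_aux_tonelli γ hγ _ _ (by fun_prop) (by fun_prop)]
        congr 1
        refine setLIntegral_congr_fun measurableSet_Ioi fun r hr => ?_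
        have hr' : 0 < r := hr
        rw [hardy_aux_tail _ _ (Real.rpow_pos_of_pos hr' _) (by positivity), mul_assoc,
          ← ENNReal.ofReal_mul (by positivity), mul_comm]
        congr 2
        rw [← Real.rpow_mul hr'.le, ← mul_div_assoc, ← Real.rpow_add hr']
        congr 1
        convert Real.rpow_zero r using 2
        field_simp
        ring
    _ = _ := by
        rw [lintegral_const_mul' _ _ ENNReal.ofReal_ne_top, ← mul_assoc,
          ← ENNReal.ofReal_mul (by positivity)]

lemma hardy_aux_sup (p : ℝ≥0∞) (hp : 1 ≤ p) (f : ℝ → ℝ) (hf : Measurable f) (t : ℝ) (ht : 0 < t) :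
    ∫⁻ r in Ioo (0:ℝ) t, ‖f r‖ₑ ≤
      eLpNorm f p (volume.restrict (Ioi (0:ℝ))) * ENNReal.ofReal (t ^ (1 - p⁻¹.toReal)) := by
  have h := eLpNorm_le_eLpNorm_mul_rpow_measure_univ (μ := volume.restrict (Ioo (0:ℝ) t)) hp
    hf.aestronglyMeasurable
  rw [eLpNorm_one_eq_lintegral_enorm] at h
  refine h.trans (mul_le_mul' (eLpNorm_mono_measure _
    (Measure.restrict_mono Ioo_subset_Ioi_self le_rfl)) (le_of_eq ?_))
  simp only [Measure.restrict_apply_univ, Real.volume_Ioo, sub_zero]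
  rw [ENNReal.ofReal_rpow_of_pos ht, ENNReal.toReal_inv]
  simp

/-- Hardy-type inequality: if 1 ≤ p ≤ q ≤ ∞, β > 1/q, γ > 0 and
(1/γ)(1/q − β) + 1 − 1/p = 0, then
‖ s^{−β} ∫_0^{s^γ} f ‖_{L^q(0,∞)} ≤ C ‖f‖_{L^p(0,∞)} for nonnegative measurable f. -/
theorem stmt17 (p q : ℝ≥0∞) (hp : 1 ≤ p) (hpq : p ≤ q) (β γ : ℝ) (hγ : 0 < γ)
    (hβ : q⁻¹.toReal < β)
    (hbal : (1/γ) * (q⁻¹.toReal - β) + 1 - p⁻¹.toReal = 0) :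
    ∃ C : ℝ, 0 < C ∧ ∀ f : ℝ → ℝ, Measurable f → (∀ r, 0 ≤ f r) →
      eLpNorm (fun s : ℝ => s ^ (-β) * ∫ r in Ioo (0:ℝ) (s ^ γ), f r) q
          (volume.restrict (Ioi (0:ℝ)))
        ≤ ENNReal.ofReal C * eLpNorm f p (volume.restrict (Ioi (0:ℝ))) := by
  have hb : β = q⁻¹.toReal + γ * (1 - p⁻¹.toReal) := by
    field_simp at hbal
    linarith
  have hpt : ∀ f : ℝ → ℝ, ∀ s : ℝ, 0 < s →
      ‖s ^ (-β) * ∫ r in Ioo (0:ℝ) (s ^ γ), f r‖ₑ ≤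
        ENNReal.ofReal (s ^ (-β)) * ∫⁻ r in Ioo (0:ℝ) (s ^ γ), ‖f r‖ₑ := by
    intro f s hs
    rw [enorm_mul, Real.enorm_of_nonneg (Real.rpow_nonneg hs.le _)]
    exact mul_le_mul_right (enorm_integral_le_lintegral_enorm _) _
  by_cases hq : q = ∞
  · subst hq
    refine ⟨1, one_pos, fun f hf _ => ?_⟩
    rw [eLpNorm_exponent_top, ENNReal.ofReal_one, one_mul]
    refine eLpNormEssSup_le_of_ae_enorm_bound ?_
    filter_upwards [ae_restrict_mem measurableSet_Ioi] with s hs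
    have hs' : 0 < s := hs
    refine (hpt f s hs').trans ((mul_le_mul_right
      (hardy_aux_sup p hp f hf _ (Real.rpow_pos_of_pos hs' γ)) _).trans (le_of_eq ?_))
    rw [mul_left_comm, ← ENNReal.ofReal_mul (by positivity), ← Real.rpow_mul hs'.le,
      ← Real.rpow_add hs', hb]
    simp
  · have hpt' : p ≠ ∞ := fun h => hq (top_le_iff.1 (h ▸ hpq))
    have hp0 : p ≠ 0 := (zero_lt_one.trans_le hp).ne'
    have hq0 : q ≠ 0 := ((zero_lt_one.trans_le hp).trans_le hpq).ne'
    obtain ⟨P, hPdef⟩ : ∃ P, P = p.toReal := ⟨_, rfl⟩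
    obtain ⟨Q, hQdef⟩ : ∃ Q, Q = q.toReal := ⟨_, rfl⟩
    have hPQ : P ≤ Q := by rw [hPdef, hQdef]; exact ENNReal.toReal_mono hq hpq
    have hPpos : 0 < P := by rw [hPdef]; exact ENNReal.toReal_pos hp0 hpt'
    have hQpos : 0 < Q := by linarith
    rw [ENNReal.toReal_inv, ← hQdef] at hb hβ
    rw [ENNReal.toReal_inv, ← hPdef] at hb
    have hP1 : 1 < P := by
      have h1 : 0 < γ * (1 - P⁻¹) := by linarith
      have h2 : 0 < 1 - P⁻¹ := (mul_pos_iff_of_pos_left hγ).1 h1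
      exact (inv_lt_one₀ hPpos).1 (by linarith)
    have hP1' : 0 < P - 1 := by linarith
    obtain ⟨K, hK⟩ : ∃ K, K = (P / (P-1)) ^ (P-1) * (1 / (γ * (P-1) / P)) := ⟨_, rfl⟩
    have hKpos : 0 < K := by rw [hK]; positivity
    refine ⟨K ^ (1/Q), by positivity, fun f hf _ => ?_⟩
    obtain ⟨N, hN⟩ : ∃ N, N = eLpNorm f p (volume.restrict (Ioi (0:ℝ))) := ⟨_, rfl⟩
    by_cases hNtop : N = ∞
    · rw [← hN, hNtop, ENNReal.mul_top (by simpa using Real.rpow_pos_of_pos hKpos (1/Q))]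
      exact le_top
    have hNP : ∫⁻ r in Ioi (0:ℝ), ‖f r‖ₑ ^ P = N ^ P := by
      rw [hN, eLpNorm_eq_lintegral_rpow_enorm_toReal hp0 hpt', ← hPdef, ← ENNReal.rpow_mul,
        one_div_mul_cancel hPpos.ne', ENNReal.rpow_one]
    have hmain := hardy_aux_main P γ hP1 hγ (fun r => ‖f r‖ₑ) (by fun_prop)
    rw [hNP, ← hK] at hmain
    rw [← hN, eLpNorm_eq_lintegral_rpow_enorm_toReal hq0 hq, ← hQdef]
    have hint : ∫⁻ s in Ioi (0:ℝ), ‖s ^ (-β) * ∫ r in Ioo (0:ℝ) (s ^ γ), f r‖ₑ ^ Q ≤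
        ENNReal.ofReal K * N ^ Q := by
      calc _ ≤ ∫⁻ s in Ioi (0:ℝ), (ENNReal.ofReal (s ^ (-1 - γ * (P-1))) *
            (∫⁻ r in Ioo (0:ℝ) (s ^ γ), ‖f r‖ₑ) ^ P) * N ^ (Q - P) := by
            refine setLIntegral_mono' measurableSet_Ioi fun s hs => ?_
            have hs' : 0 < s := hs
            refine (ENNReal.rpow_le_rpow (hpt f s hs') hQpos.le).trans ?_
            have hsup := hardy_aux_sup p hp f hf _ (Real.rpow_pos_of_pos hs' γ)
            rw [← hN, ENNReal.toReal_inv, ← hPdef] at hsup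
            generalize (∫⁻ r in Ioo (0:ℝ) (s ^ γ), ‖f r‖ₑ) = G at hsup ⊢
            rw [ENNReal.mul_rpow_of_nonneg _ _ hQpos.le]
            have e1 : G ^ Q = G ^ P * G ^ (Q - P) := by
              rw [← ENNReal.rpow_add_of_nonneg _ _ hPpos.le (by linarith)]
              congr 1; ring
            rw [e1]
            have h2 := ENNReal.rpow_le_rpow hsup (show 0 ≤ Q - P by linarith)
            rw [ENNReal.mul_rpow_of_nonneg _ _ (show 0 ≤ Q - P by linarith)] at h2
            refine (mul_le_mul_right (mul_le_mul_right h2 _) _).trans (le_of_eq ?_)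
            have e2 : ENNReal.ofReal (s ^ (-1 - γ * (P-1))) = ENNReal.ofReal (s ^ (-β)) ^ Q *
                ENNReal.ofReal ((s ^ γ) ^ (1 - P⁻¹)) ^ (Q - P) := by
              rw [ENNReal.ofReal_rpow_of_nonneg (by positivity) hQpos.le,
                ENNReal.ofReal_rpow_of_nonneg (by positivity) (by linarith),
                ← ENNReal.ofReal_mul (by positivity), ← Real.rpow_mul hs'.le,
                ← Real.rpow_mul hs'.le, ← Real.rpow_mul hs'.le, ← Real.rpow_add hs', hb]
              congr 2
              field_simp
              ring
            rw [e2]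
            ring
        _ ≤ (ENNReal.ofReal K * N ^ P) * N ^ (Q - P) := by
            rw [lintegral_mul_const' _ _ (ENNReal.rpow_ne_top_of_nonneg (by linarith) hNtop)]
            exact mul_le_mul_left hmain _
        _ = _ := by
            rw [mul_assoc, ← ENNReal.rpow_add_of_nonneg _ _ hPpos.le (by linarith)]
            congr 2; ring
    refine (ENNReal.rpow_le_rpow hint (by positivity)).trans (le_of_eq ?_)
    rw [ENNReal.mul_rpow_of_nonneg _ _ (by positivity), ← ENNReal.rpow_mul,
      mul_one_div_cancel hQpos.ne', ENNReal.rpow_one,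
      ENNReal.ofReal_rpow_of_nonneg hKpos.le (by positivity)]
end
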